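/- Let f : {0,1}^n × {0,1}^n → {0,1} be a total Boolean function and let μ be a product distribution on {0,1}^n × {0,1}^n (i.e., μ = μ_A ⊗ μ_B for distributions μ_A, μ_B on {0,1}^n). Then there exists a universal constant C > 0 such that the distributional communication complexity of f with error 0.49 under μ satisfies CC^μ_{0.49}(f) ≤ C · (IC_{1/8}(f) · log IC_{1/8}(f))^2 (for IC_{1/8}(f) ≥ 2). -/

import Mathlib

open scoped BigOperators
open scoped Classical

noncomputable section

/-! ## Probability distributions on finite types -/

/-- `p` is a probability distribution on the finite type `α`. -/
def IsDist {α : Type} [Fintype α] (p : α → ℝ) : Prop :=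
  (∀ a, 0 ≤ p a) ∧ ∑ a, p a = 1

/-- `μ` (in curried form) is a probability distribution on `X × Y`. -/
def IsDist2 {X Y : Type} [Fintype X] [Fintype Y] (μ : X → Y → ℝ) : Prop :=
  (∀ x y, 0 ≤ μ x y) ∧ ∑ x, ∑ y, μ x y = 1

/-! ## Deterministic communication protocols -/

/-- A deterministic two-party communication protocol: a finite binary tree where each
internal node is owned by Alice (`nodeA`) or Bob (`nodeB`) and is labeled by a function
of that player's input choosing one of the two children; leaves carry Boolean outputs. -/
inductive Protocol (X Y : Type) : Type
  | leaf : Bool → Protocol X Y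
  | nodeA : (X → Bool) → Protocol X Y → Protocol X Y → Protocol X Y
  | nodeB : (Y → Bool) → Protocol X Y → Protocol X Y → Protocol X Y

namespace Protocol

def eval {X Y : Type} : Protocol X Y → X → Y → Bool
  | leaf b, _, _ => b
  | nodeA g t0 t1, x, y => if g x then eval t1 x y else eval t0 x y
  | nodeB g t0 t1, x, y => if g y then eval t1 x y else eval t0 x y

/-- Depth (number of bits communicated in the worst case). -/
def depth {X Y : Type} : Protocol X Y → ℕ
  | leaf _ => 0
  | nodeA _ t0 t1 => max (depth t0) (depth t1) + 1
  | nodeB _ t0 t1 => max (depth t0) (depth t1) + 1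

/-- Number of leaves. -/
def leavesCount {X Y : Type} : Protocol X Y → ℕ
  | leaf _ => 1
  | nodeA _ t0 t1 => leavesCount t0 + leavesCount t1
  | nodeB _ t0 t1 => leavesCount t0 + leavesCount t1

/-- The sequence of bits communicated on input `(x, y)`. -/
def transcript {X Y : Type} : Protocol X Y → X → Y → List Bool
  | leaf _, _, _ => []
  | nodeA g t0 t1, x, y =>
      if g x then true :: transcript t1 x y else false :: transcript t0 x y
  | nodeB g t0 t1, x, y =>
      if g y then true :: transcript t1 x y else false :: transcript t0 x y

end Protocol

/-- Error of a deterministic protocol w.r.t. input distribution `μ`. -/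
def commErr {X Y : Type} [Fintype X] [Fintype Y]
    (μ : X → Y → ℝ) (f : X → Y → Bool) (P : Protocol X Y) : ℝ :=
  ∑ x, ∑ y, if P.eval x y ≠ f x y then μ x y else 0

/-- Distributional communication complexity `CC^μ_ε(f)`: the minimum depth of a
deterministic protocol erring with probability at most `ε` under `μ`. -/
def CCdist {X Y : Type} [Fintype X] [Fintype Y]
    (μ : X → Y → ℝ) (f : X → Y → Bool) (ε : ℝ) : ℕ :=
  sInf {d : ℕ | ∃ P : Protocol X Y, P.depth ≤ d ∧ commErr μ f P ≤ ε}

/-- The advantage `adv_μ(Π)` of a protocol w.r.t. a (not necessarily normalized) measure. -/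
def protAdv {X Y : Type} [Fintype X] [Fintype Y]
    (μ : X → Y → ℝ) (f : X → Y → Bool) (P : Protocol X Y) : ℝ :=
  ∑ x, ∑ y, if P.eval x y = f x y then μ x y else - μ x y

/-! ## Information complexity -/

/-- Probability of an event under a finite (possibly unnormalized) distribution. -/
def prOf {Ω : Type} [Fintype Ω] (p : Ω → ℝ) (q : Ω → Prop) : ℝ :=
  ∑ ω, if q ω then p ω else 0

/-- Conditional mutual information `I(A ; B | C)` (in bits) of random variables `A`, `B`, `C`
defined on a finite probability space `(Ω, p)`. -/
def condMI {Ω α β γ : Type} [Fintype Ω] (p : Ω → ℝ)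
    (A : Ω → α) (B : Ω → β) (C : Ω → γ) : ℝ :=
  ∑ ω, p ω * Real.logb 2 (
    (prOf p (fun ω' => A ω' = A ω ∧ B ω' = B ω ∧ C ω' = C ω) *
      prOf p (fun ω' => C ω' = C ω)) /
    (prOf p (fun ω' => A ω' = A ω ∧ C ω' = C ω) *
      prOf p (fun ω' => B ω' = B ω ∧ C ω' = C ω)))

/-- Internal information cost `IC^μ(Π) = I(X;T|Y) + I(Y;T|X)` of the public-coin protocol
given by a distribution `ρ` on `Fin m` together with deterministic protocols `P r`; the
transcript `T` consists of the public randomness together with the communicated bits. -/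
def infoCost {X Y : Type} [Fintype X] [Fintype Y] (μ : X → Y → ℝ)
    {m : ℕ} (ρ : Fin m → ℝ) (P : Fin m → Protocol X Y) : ℝ :=
  condMI (fun ω : X × Y × Fin m => μ ω.1 ω.2.1 * ρ ω.2.2)
      (fun ω => ω.1)
      (fun ω => (ω.2.2, (P ω.2.2).transcript ω.1 ω.2.1))
      (fun ω => ω.2.1)
  + condMI (fun ω : X × Y × Fin m => μ ω.1 ω.2.1 * ρ ω.2.2)
      (fun ω => ω.2.1)
      (fun ω => (ω.2.2, (P ω.2.2).transcript ω.1 ω.2.1))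
      (fun ω => ω.1)

/-- Error of a public-coin protocol under input distribution `μ` and coin distribution `ρ`. -/
def randErr {X Y : Type} [Fintype X] [Fintype Y] (μ : X → Y → ℝ) (f : X → Y → Bool)
    {m : ℕ} (ρ : Fin m → ℝ) (P : Fin m → Protocol X Y) : ℝ :=
  ∑ x, ∑ y, ∑ r, if (P r).eval x y ≠ f x y then μ x y * ρ r else 0

/-- `IC^μ_ε(f)`: infimum of the information cost over all public-coin protocols computing
`f` with error at most `ε` under `μ`. -/
def ICmu {X Y : Type} [Fintype X] [Fintype Y]
    (μ : X → Y → ℝ) (f : X → Y → Bool) (ε : ℝ) : ℝ :=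
  sInf { c : ℝ | ∃ (m : ℕ) (ρ : Fin m → ℝ) (P : Fin m → Protocol X Y),
    IsDist ρ ∧ randErr μ f ρ P ≤ ε ∧ c = infoCost μ ρ P }

/-- `IC_ε(f) = max_μ IC^μ_ε(f)`. -/
def IC {X Y : Type} [Fintype X] [Fintype Y] (f : X → Y → Bool) (ε : ℝ) : ℝ :=
  sSup { c : ℝ | ∃ μ : X → Y → ℝ, IsDist2 μ ∧ c = ICmu μ f ε }

/-! ## Rectangles, smooth rectangle bound and partition bound -/

/-- Total weight of rectangles containing `(x, y)`: a combinatorial rectangle is a pair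
`R = (S, T)` of finite sets, and `(x,y) ∈ R` iff `x ∈ S ∧ y ∈ T`. -/
def rcov {X Y : Type} [Fintype X] [Fintype Y]
    (w : Finset X × Finset Y → ℝ) (x : X) (y : Y) : ℝ :=
  ∑ R : Finset X × Finset Y, if x ∈ R.1 ∧ y ∈ R.2 then w R else 0

/-- `μ(R)` for a rectangle `R`. -/
def rMass {X Y : Type} [Fintype X] [Fintype Y]
    (μ : X → Y → ℝ) (R : Finset X × Finset Y) : ℝ :=
  ∑ x, ∑ y, if x ∈ R.1 ∧ y ∈ R.2 then μ x y else 0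

/-- `μ_z(R) = μ(R ∩ f⁻¹(z))` for a rectangle `R`. -/
def rMassZ {X Y : Type} [Fintype X] [Fintype Y]
    (μ : X → Y → ℝ) (f : X → Y → Bool) (z : Bool) (R : Finset X × Finset Y) : ℝ :=
  ∑ x, ∑ y, if (x ∈ R.1 ∧ y ∈ R.2) ∧ f x y = z then μ x y else 0

/-- `μ_z = μ(f⁻¹(z))`. -/
def totalZ {X Y : Type} [Fintype X] [Fintype Y]
    (μ : X → Y → ℝ) (f : X → Y → Bool) (z : Bool) : ℝ :=
  ∑ x, ∑ y, if f x y = z then μ x y else 0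

/-- `|μ|`, the total mass of a measure. -/
def totalMass {X Y : Type} [Fintype X] [Fintype Y] (μ : X → Y → ℝ) : ℝ :=
  ∑ x, ∑ y, μ x y

/-- Restriction of a measure to a rectangle. -/
def restrictRect {X Y : Type} (μ : X → Y → ℝ) (R : Finset X × Finset Y) : X → Y → ℝ :=
  fun x y => if x ∈ R.1 ∧ y ∈ R.2 then μ x y else 0

/-- Distributional smooth rectangle bound `srec^{z,μ}_{ε,δ}(f)` (LP optimal value). -/
def srecZmu {X Y : Type} [Fintype X] [Fintype Y]
    (μ : X → Y → ℝ) (f : X → Y → Bool) (z : Bool) (ε δ : ℝ) : ℝ :=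
  sInf { v : ℝ | ∃ w : Finset X × Finset Y → ℝ,
    (∀ R, 0 ≤ w R) ∧
    ((1 - ε) * totalZ μ f z ≤ ∑ x, ∑ y, if f x y = z then μ x y * rcov w x y else 0) ∧
    (∀ x y, f x y ≠ z → rcov w x y ≤ δ) ∧
    (∀ x y, rcov w x y ≤ 1) ∧
    v = ∑ R : Finset X × Finset Y, w R }

/-- `srec^μ_{ε,δ}(f) = max{srec^{0,μ}_{ε,δ}(f), srec^{1,μ}_{ε,δ}(f)}`. -/
def srecMu {X Y : Type} [Fintype X] [Fintype Y]
    (μ : X → Y → ℝ) (f : X → Y → Bool) (ε δ : ℝ) : ℝ :=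
  max (srecZmu μ f false ε δ) (srecZmu μ f true ε δ)

/-- Smooth rectangle bound `srec^z_{ε,δ}(f)` (LP optimal value). -/
def srecZ {X Y : Type} [Fintype X] [Fintype Y]
    (f : X → Y → Bool) (z : Bool) (ε δ : ℝ) : ℝ :=
  sInf { v : ℝ | ∃ w : Finset X × Finset Y → ℝ,
    (∀ R, 0 ≤ w R) ∧
    (∀ x y, f x y = z → 1 - ε ≤ rcov w x y) ∧
    (∀ x y, f x y ≠ z → rcov w x y ≤ δ) ∧
    (∀ x y, rcov w x y ≤ 1) ∧
    v = ∑ R : Finset X × Finset Y, w R }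

/-- `srec_{ε,δ}(f) = max{srec^0_{ε,δ}(f), srec^1_{ε,δ}(f)}`. -/
def srec {X Y : Type} [Fintype X] [Fintype Y] (f : X → Y → Bool) (ε δ : ℝ) : ℝ :=
  max (srecZ f false ε δ) (srecZ f true ε δ)

/-- Partition bound `prt_ε(f)` (LP optimal value). -/
def prt {X Y : Type} [Fintype X] [Fintype Y] (f : X → Y → Bool) (ε : ℝ) : ℝ :=
  sInf { v : ℝ | ∃ w : Bool → Finset X × Finset Y → ℝ,
    (∀ z R, 0 ≤ w z R) ∧
    (∀ x y, 1 - ε ≤ rcov (w (f x y)) x y) ∧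
    (∀ x y, rcov (w false) x y + rcov (w true) x y = 1) ∧
    v = ∑ R : Finset X × Finset Y, (w false R + w true R) }

/-! ### General-output versions -/

/-- Smooth rectangle bound `srec^z_{ε,δ}(f)` for general output alphabet. -/
def srecZgen {X Y Z : Type} [Fintype X] [Fintype Y]
    (f : X → Y → Z) (z : Z) (ε δ : ℝ) : ℝ :=
  sInf { v : ℝ | ∃ w : Finset X × Finset Y → ℝ,
    (∀ R, 0 ≤ w R) ∧
    (∀ x y, f x y = z → 1 - ε ≤ rcov w x y) ∧
    (∀ x y, f x y ≠ z → rcov w x y ≤ δ) ∧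
    (∀ x y, rcov w x y ≤ 1) ∧
    v = ∑ R : Finset X × Finset Y, w R }

/-- `srec_{ε,δ}(f) = max_{z ∈ Z} srec^z_{ε,δ}(f)`. -/
def srecGen {X Y Z : Type} [Fintype X] [Fintype Y] [Fintype Z]
    (f : X → Y → Z) (ε δ : ℝ) : ℝ :=
  sSup (Set.range fun z : Z => srecZgen f z ε δ)

/-- Distributional smooth rectangle bound for general output alphabet. -/
def srecZmuGen {X Y Z : Type} [Fintype X] [Fintype Y]
    (μ : X → Y → ℝ) (f : X → Y → Z) (z : Z) (ε δ : ℝ) : ℝ :=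
  sInf { v : ℝ | ∃ w : Finset X × Finset Y → ℝ,
    (∀ R, 0 ≤ w R) ∧
    ((1 - ε) * (∑ x, ∑ y, if f x y = z then μ x y else 0) ≤
      ∑ x, ∑ y, if f x y = z then μ x y * rcov w x y else 0) ∧
    (∀ x y, f x y ≠ z → rcov w x y ≤ δ) ∧
    (∀ x y, rcov w x y ≤ 1) ∧
    v = ∑ R : Finset X × Finset Y, w R }

/-- `srec^μ_{ε,δ}(f) = max_{z ∈ Z} srec^{z,μ}_{ε,δ}(f)`. -/
def srecMuGen {X Y Z : Type} [Fintype X] [Fintype Y] [Fintype Z]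
    (μ : X → Y → ℝ) (f : X → Y → Z) (ε δ : ℝ) : ℝ :=
  sSup (Set.range fun z : Z => srecZmuGen μ f z ε δ)

/-- Partition bound for general output alphabet. -/
def prtGen {X Y Z : Type} [Fintype X] [Fintype Y] [Fintype Z]
    (f : X → Y → Z) (ε : ℝ) : ℝ :=
  sInf { v : ℝ | ∃ w : Z → Finset X × Finset Y → ℝ,
    (∀ z R, 0 ≤ w z R) ∧
    (∀ x y, 1 - ε ≤ rcov (w (f x y)) x y) ∧
    (∀ x y, (∑ z : Z, rcov (w z) x y) = 1) ∧
    v = ∑ z : Z, ∑ R : Finset X × Finset Y, w z R }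

/-! ## Decision trees, subcubes and the query partition bound -/

/-- Deterministic decision trees on `n` input bits. -/
inductive DTree (n : ℕ) : Type
  | leaf : Bool → DTree n
  | node : Fin n → DTree n → DTree n → DTree n

def DTree.eval {n : ℕ} : DTree n → (Fin n → Bool) → Bool
  | .leaf b, _ => b
  | .node i t0 t1, x => if x i then DTree.eval t1 x else DTree.eval t0 x

def DTree.depth {n : ℕ} : DTree n → ℕ
  | .leaf _ => 0
  | .node _ t0 t1 => max (DTree.depth t0) (DTree.depth t1) + 1

/-- Error of a decision tree w.r.t. the input distribution `μ`. -/
def qErr {n : ℕ} (μ : (Fin n → Bool) → ℝ) (g : (Fin n → Bool) → Bool) (T : DTree n) : ℝ :=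
  ∑ x, if T.eval x ≠ g x then μ x else 0

/-- Distributional query complexity `QC^μ_ε(g)`: minimum depth of a deterministic decision
tree erring with probability at most `ε` under `μ`. -/
def QCdist {n : ℕ} (μ : (Fin n → Bool) → ℝ) (g : (Fin n → Bool) → Bool) (ε : ℝ) : ℕ :=
  sInf {d : ℕ | ∃ T : DTree n, T.depth ≤ d ∧ qErr μ g T ≤ ε}

/-- A subcube of `{0,1}ⁿ`, given by its support pattern `s ∈ {0,1,⋆}ⁿ`. -/
abbrev Subcube (n : ℕ) := Fin n → Option Bool

/-- Membership in a subcube. -/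
def memCube {n : ℕ} (A : Subcube n) (x : Fin n → Bool) : Prop :=
  ∀ i, ∀ b, A i = some b → x i = b

/-- Size of (the support of) a subcube. -/
def cubeSize {n : ℕ} (A : Subcube n) : ℕ :=
  (Finset.univ.filter fun i => (A i).isSome).card

/-- Total weight of subcubes containing `x`. -/
def cubeCov {n : ℕ} (w : Subcube n → ℝ) (x : Fin n → Bool) : ℝ :=
  ∑ A : Subcube n, if memCube A x then w A else 0

/-- Query partition bound `qprt_ε(g)` (LP optimal value). -/
def qprt {n : ℕ} (g : (Fin n → Bool) → Bool) (ε : ℝ) : ℝ :=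
  sInf { v : ℝ | ∃ w : Bool → Subcube n → ℝ,
    (∀ z A, 0 ≤ w z A) ∧
    (∀ x, 1 - ε ≤ cubeCov (w (g x)) x) ∧
    (∀ x, cubeCov (w false) x + cubeCov (w true) x = 1) ∧
    v = ∑ A : Subcube n, (w false A + w true A) * 2 ^ cubeSize A }

/-- The bit-wise product distribution on `{0,1}ⁿ` with `p_i(1) = p i`, `p_i(0) = 1 - p i`. -/
def bitProd {n : ℕ} (p : Fin n → ℝ) : (Fin n → Bool) → ℝ :=
  fun x => ∏ i, if x i then p i else 1 - p i

/-- `μ(A)` for a subcube (or any set given by a membership predicate). -/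
def cubeMass {n : ℕ} (μ : (Fin n → Bool) → ℝ) (A : Subcube n) : ℝ :=
  ∑ x, if memCube A x then μ x else 0

/-- `μ_z(A) = μ(A ∩ g⁻¹(z))` for a subcube `A`. -/
def cubeMassZ {n : ℕ} (μ : (Fin n → Bool) → ℝ) (g : (Fin n → Bool) → Bool)
    (z : Bool) (A : Subcube n) : ℝ :=
  ∑ x, if memCube A x ∧ g x = z then μ x else 0

/-- `μ_z = μ(g⁻¹(z))`. -/
def qTotalZ {n : ℕ} (μ : (Fin n → Bool) → ℝ) (g : (Fin n → Bool) → Bool) (z : Bool) : ℝ :=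
  ∑ x, if g x = z then μ x else 0

/-- Mass of a finite set of pairs under the product measure `μA ⊗ μB`. -/
def pairMass {X Y : Type} (μA : X → ℝ) (μB : Y → ℝ) (A : Finset (X × Y)) : ℝ :=
  ∑ q ∈ A, μA q.1 * μB q.2

end

/-! ### Building and analysing protocols -/

namespace Protocol

variable {X Y : Type}

theorem exists_sendA {d : ℕ} (b : ℕ) : ∀ (g : X → ℕ) (Q : ℕ → Protocol X Y),
    (∀ x, g x < 2 ^ b) → (∀ i, (Q i).depth ≤ d) →
    ∃ P : Protocol X Y, P.depth ≤ d + b ∧ ∀ x y, P.eval x y = (Q (g x)).eval x y := by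
  induction b with
  | zero =>
    intro g Q hg hQ
    exact ⟨Q 0, hQ 0, fun x y => by rw [Nat.lt_one_iff.1 (hg x)]⟩
  | succ b ih =>
    intro g Q hg hQ
    have hg' : ∀ x, g x / 2 < 2 ^ b := fun x => by
      have := hg x
      rw [pow_succ] at this
      omega
    obtain ⟨P0, hd0, he0⟩ := ih (fun x => g x / 2) (fun i => Q (2 * i)) hg' fun i => hQ _
    obtain ⟨P1, hd1, he1⟩ := ih (fun x => g x / 2) (fun i => Q (2 * i + 1)) hg' fun i => hQ _
    refine ⟨nodeA (fun x => decide (g x % 2 = 1)) P0 P1, ?_, fun x y => ?_⟩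
    · simp only [depth]
      omega
    · by_cases h : g x % 2 = 1
      · have e : 2 * (g x / 2) + 1 = g x := by omega
        simp [eval, h, he1, e]
      · have e : 2 * (g x / 2) = g x := by omega
        simp [eval, h, he0, e]

theorem exists_sendB {d : ℕ} (b : ℕ) : ∀ (g : Y → ℕ) (Q : ℕ → Protocol X Y),
    (∀ y, g y < 2 ^ b) → (∀ i, (Q i).depth ≤ d) →
    ∃ P : Protocol X Y, P.depth ≤ d + b ∧ ∀ x y, P.eval x y = (Q (g y)).eval x y := by
  induction b with
  | zero =>
    intro g Q hg hQ
    exact ⟨Q 0, hQ 0, fun x y => by rw [Nat.lt_one_iff.1 (hg y)]⟩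
  | succ b ih =>
    intro g Q hg hQ
    have hg' : ∀ y, g y / 2 < 2 ^ b := fun y => by
      have := hg y
      rw [pow_succ] at this
      omega
    obtain ⟨P0, hd0, he0⟩ := ih (fun y => g y / 2) (fun i => Q (2 * i)) hg' fun i => hQ _
    obtain ⟨P1, hd1, he1⟩ := ih (fun y => g y / 2) (fun i => Q (2 * i + 1)) hg' fun i => hQ _
    refine ⟨nodeB (fun y => decide (g y % 2 = 1)) P0 P1, ?_, fun x y => ?_⟩
    · simp only [depth]
      omega
    · by_cases h : g y % 2 = 1
      · have e : 2 * (g y / 2) + 1 = g y := by omega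
        simp [eval, h, he1, e]
      · have e : 2 * (g y / 2) = g y := by omega
        simp [eval, h, he0, e]

/-- Alice and Bob announce one index each and continue with the protocol so selected. -/
theorem exists_send {d b : ℕ} (g : X → ℕ) (h : Y → ℕ) (Q : ℕ → ℕ → Protocol X Y)
    (hg : ∀ x, g x < 2 ^ b) (hh : ∀ y, h y < 2 ^ b) (hQ : ∀ i j, (Q i j).depth ≤ d) :
    ∃ P : Protocol X Y, P.depth ≤ d + 2 * b ∧
      ∀ x y, P.eval x y = (Q (g x) (h y)).eval x y := by
  choose R hRd hRe using fun i => exists_sendB b h (Q i) hh (hQ i)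
  obtain ⟨P, hPd, hPe⟩ := exists_sendA b g R hg hRd
  exact ⟨P, by omega, fun x y => by rw [hPe, hRe]⟩

theorem exists_eval_eq [Fintype X] [Fintype Y] (f : X → Y → Bool) :
    ∃ P : Protocol X Y, ∀ x y, P.eval x y = f x y := by
  let eX := Fintype.equivFin X
  let eY := Fintype.equivFin Y
  let Q : ℕ → ℕ → Protocol X Y := fun i j =>
    if h : i < Fintype.card X ∧ j < Fintype.card Y then
      leaf (f (eX.symm ⟨i, h.1⟩) (eY.symm ⟨j, h.2⟩)) else leaf false
  obtain ⟨P, -, hP⟩ := exists_send (d := 0) (b := Fintype.card X + Fintype.card Y)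
    (fun x => (eX x : ℕ)) (fun y => (eY y : ℕ)) Q
    (fun x => (eX x).2.trans ((Nat.le_add_right _ _).trans_lt Nat.lt_two_pow_self))
    (fun y => (eY y).2.trans ((Nat.le_add_left _ _).trans_lt Nat.lt_two_pow_self))
    (fun i j => by
      simp only [Q]
      split_ifs <;> simp [depth])
  refine ⟨P, fun x y => ?_⟩
  rw [hP]
  simp [Q, eval]

theorem eval_eq_of_transcript_eq (P : Protocol X Y) {x x' : X} {y y' : Y}
    (h : P.transcript x y = P.transcript x' y') : P.eval x y = P.eval x' y' := by
  induction P with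
  | leaf b => rfl
  | nodeA g t0 t1 ih0 ih1 =>
    by_cases hx : g x <;> by_cases hx' : g x' <;> simp_all [transcript, eval]
  | nodeB g t0 t1 ih0 ih1 =>
    by_cases hy : g y <;> by_cases hy' : g y' <;> simp_all [transcript, eval]

/-- The inputs producing a given transcript form a combinatorial rectangle. -/
theorem transcript_rect (P : Protocol X Y) {x x' : X} {y y' : Y}
    (h : P.transcript x y = P.transcript x' y') :
    P.transcript x y' = P.transcript x y := by
  induction P with
  | leaf b => rfl
  | nodeA g t0 t1 ih0 ih1 =>
    by_cases hx : g x <;> by_cases hx' : g x' <;> simp_all [transcript]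
  | nodeB g t0 t1 ih0 ih1 =>
    by_cases hy : g y <;> by_cases hy' : g y' <;> simp_all [transcript]

end Protocol

/-! ### Weighted families of rectangles -/

/-- Total weight of the rectangles `S i ×ˢ T i` containing `(x, y)`. -/
noncomputable def cover {X Y ι : Type} [Fintype ι] (w : ι → ℝ)
    (S : ι → Finset X) (T : ι → Finset Y) (x : X) (y : Y) : ℝ :=
  ∑ i, if x ∈ S i ∧ y ∈ T i then w i else 0

section Cover

variable {X Y ι : Type} [Fintype ι]

theorem cover_nonneg {w : ι → ℝ} (hw : ∀ i, 0 ≤ w i) (S : ι → Finset X) (T : ι → Finset Y)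
    (x : X) (y : Y) : 0 ≤ cover w S T x y :=
  Finset.sum_nonneg fun i _ => by split_ifs <;> simp [hw]

theorem cover_mono {w w' : ι → ℝ} (h : ∀ i, w i ≤ w' i) (S : ι → Finset X) (T : ι → Finset Y)
    (x : X) (y : Y) : cover w S T x y ≤ cover w' S T x y :=
  Finset.sum_le_sum fun i _ => by split_ifs <;> simp [h]

theorem cover_le_sum {w : ι → ℝ} (hw : ∀ i, 0 ≤ w i) (S : ι → Finset X) (T : ι → Finset Y)
    (x : X) (y : Y) : cover w S T x y ≤ ∑ i, w i :=
  Finset.sum_le_sum fun i _ => by split_ifs <;> simp [hw]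

/-- Any weighted family of rectangles is equivalent to a weighting of all rectangles. -/
theorem exists_rcov_eq_cover [Fintype X] [Fintype Y] {w : ι → ℝ} (hw : ∀ i, 0 ≤ w i)
    (S : ι → Finset X) (T : ι → Finset Y) :
    ∃ v : Finset X × Finset Y → ℝ, (∀ R, 0 ≤ v R) ∧ ∑ R, v R = ∑ i, w i ∧
      ∀ x y, rcov v x y = cover w S T x y := by
  refine ⟨fun R => ∑ i, if (S i, T i) = R then w i else 0, fun R => ?_, ?_, fun x y => ?_⟩
  · exact Finset.sum_nonneg fun i _ => by split_ifs <;> simp [hw]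
  · rw [Finset.sum_comm]
    simp
  · simp only [rcov, cover]
    have : ∀ R : Finset X × Finset Y,
        (if x ∈ R.1 ∧ y ∈ R.2 then ∑ i, (if (S i, T i) = R then w i else 0) else 0) =
        ∑ i, if (S i, T i) = R then (if x ∈ R.1 ∧ y ∈ R.2 then w i else 0) else 0 := by
      intro R
      by_cases h : x ∈ R.1 ∧ y ∈ R.2 <;> simp [h]
    simp only [this]
    rw [Finset.sum_comm]
    simp

/-- Intersecting `k` independent rectangles raises the coverage to the `k`-th power. -/
theorem exists_cover_pow [Fintype X] [Fintype Y] (w : ι → ℝ) (hw : ∀ i, 0 ≤ w i)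
    (S : ι → Finset X) (T : ι → Finset Y) (k : ℕ) :
    ∃ (v : (Fin k → ι) → ℝ) (S' : (Fin k → ι) → Finset X) (T' : (Fin k → ι) → Finset Y),
      (∀ i, 0 ≤ v i) ∧ ∑ i, v i = (∑ i, w i) ^ k ∧
      ∀ x y, cover v S' T' x y = cover w S T x y ^ k := by
  refine ⟨fun p => ∏ j, w (p j), fun p => Finset.univ.filter fun x => ∀ j, x ∈ S (p j),
    fun p => Finset.univ.filter fun y => ∀ j, y ∈ T (p j),
    fun p => Finset.prod_nonneg fun j _ => hw _, (Fintype.sum_pow _ _).symm, fun x y => ?_⟩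
  simp only [cover]
  rw [Fintype.sum_pow]
  refine Finset.sum_congr rfl fun p _ => ?_
  by_cases h : ∀ j, x ∈ S (p j) ∧ y ∈ T (p j)
  · rw [if_pos (by simpa [forall_and] using h)]
    exact Finset.prod_congr rfl fun j _ => by rw [if_pos (h j)]
  · rw [if_neg (by simpa [forall_and] using h)]
    push Not at h
    obtain ⟨j, hj⟩ := h
    exact (Finset.prod_eq_zero (Finset.mem_univ j)
      (if_neg fun h => hj h.1 h.2)).symm

end Cover

/-! ### Hashing short lists -/

theorem card_forall_mem_eq_mul {τ : Type} [Fintype τ] {M : ℕ} (m₀ : Fin M) (F : Finset τ) :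
    (Finset.univ.filter fun h : τ → Fin M => ∀ t ∈ F, h t = m₀).card * M ^ F.card =
      M ^ Fintype.card τ := by
  have e : (Finset.univ.filter fun h : τ → Fin M => ∀ t ∈ F, h t = m₀) =
      Fintype.piFinset fun t => if t ∈ F then {m₀} else Finset.univ := by
    ext h
    simp only [Finset.mem_filter, Finset.mem_univ, true_and, Fintype.mem_piFinset]
    refine forall_congr' fun t => ?_
    by_cases ht : t ∈ F <;> simp [ht]
  have e2 : M ^ F.card = ∏ t : τ, if t ∈ F then M else 1 := by
    simp
  rw [e, Fintype.card_piFinset, e2, ← Finset.prod_mul_distrib]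
  have : ∀ t : τ, ((if t ∈ F then {m₀} else Finset.univ : Finset (Fin M)).card *
      if t ∈ F then M else 1) = M := by
    intro t
    by_cases ht : t ∈ F <;> simp [ht]
  simp [this]

/-- If Alice and Bob hold lists of length at most `2 ^ D`, then random hashing gives
a weighting of rectangles of total weight `2 ^ (2 * D + 5)` that approximates
the indicator of the lists intersecting, up to the size of the intersection. -/
theorem exists_rcov_of_lists {X Y τ : Type} [Fintype X] [Fintype Y] [Fintype τ]
    (L : X → Finset τ) (L' : Y → Finset τ) (D : ℕ)
    (hL : ∀ x, (L x).card ≤ 2 ^ D) (hL' : ∀ y, (L' y).card ≤ 2 ^ D) :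
    ∃ v : Finset X × Finset Y → ℝ, (∀ R, 0 ≤ v R) ∧ ∑ R, v R = 2 ^ (2 * D + 5) ∧
      ∀ x y, ((L x ∩ L' y).Nonempty → 1 ≤ rcov v x y) ∧
        rcov v x y ≤ (L x ∩ L' y).card + 1 / 32 := by
  set M : ℕ := 2 ^ (2 * D + 5) with hM
  have hMpos : 0 < M := by positivity
  let m₀ : Fin M := ⟨0, hMpos⟩
  set N : ℕ := Fintype.card τ
  let S : (τ → Fin M) → Finset X := fun h => Finset.univ.filter fun x => ∃ t ∈ L x, h t = m₀
  let T : (τ → Fin M) → Finset Y := fun h => Finset.univ.filter fun y => ∃ t ∈ L' y, h t = m₀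
  have hMR : (0 : ℝ) < M := by exact_mod_cast hMpos
  obtain ⟨v, hv0, hvs, hvc⟩ := exists_rcov_eq_cover (w := fun _ : τ → Fin M => (M : ℝ) / M ^ N)
    (fun _ => by positivity) S T
  have hset : ∀ x y, rcov v x y = (M : ℝ) / M ^ N * ((Finset.univ.filter
      fun h : τ → Fin M => (∃ t ∈ L x, h t = m₀) ∧ ∃ t ∈ L' y, h t = m₀).card : ℝ) := by
    intro x y
    rw [hvc, cover, ← Finset.sum_filter, Finset.sum_const, nsmul_eq_mul, mul_comm]
    simp only [S, T, Finset.mem_filter, Finset.mem_univ, true_and]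
  have hsingle : ∀ t : τ, ((Finset.univ.filter fun h : τ → Fin M => h t = m₀).card : ℝ) =
      (M : ℝ) ^ N / M := by
    intro t
    have := card_forall_mem_eq_mul m₀ ({t} : Finset τ)
    simp only [Finset.mem_singleton, forall_eq, Finset.card_singleton, pow_one] at this
    rw [eq_div_iff hMR.ne']
    exact_mod_cast this
  have hpair : ∀ s t : τ, s ≠ t →
      ((Finset.univ.filter fun h : τ → Fin M => h s = m₀ ∧ h t = m₀).card : ℝ) =
        (M : ℝ) ^ N / M ^ 2 := by
    intro s t hst
    have := card_forall_mem_eq_mul m₀ ({s, t} : Finset τ)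
    simp only [Finset.mem_insert, Finset.mem_singleton, forall_eq_or_imp, forall_eq,
      Finset.card_pair hst] at this
    rw [eq_div_iff (by positivity)]
    exact_mod_cast this
  refine ⟨v, hv0, ?_, fun x y => ⟨fun ⟨t, ht⟩ => ?_, ?_⟩⟩
  · rw [hvs, Finset.sum_const, Finset.card_univ, Fintype.card_fun, Fintype.card_fin, nsmul_eq_mul]
    push_cast
    rw [mul_div_cancel₀ _ (by positivity)]
    simp [hM]
  · rw [hset]
    rw [Finset.mem_inter] at ht
    have hle : ((Finset.univ.filter fun h : τ → Fin M => h t = m₀).card : ℝ) ≤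
        ((Finset.univ.filter fun h : τ → Fin M =>
          (∃ t ∈ L x, h t = m₀) ∧ ∃ t ∈ L' y, h t = m₀).card : ℝ) := by
      exact_mod_cast Finset.card_le_card fun h hh => by
        simp only [Finset.mem_filter, Finset.mem_univ, true_and] at hh ⊢
        exact ⟨⟨t, ht.1, hh⟩, ⟨t, ht.2, hh⟩⟩
    rw [hsingle] at hle
    calc (1 : ℝ) = (M : ℝ) / M ^ N * ((M : ℝ) ^ N / M) := by field_simp
      _ ≤ _ := by gcongr
  · rw [hset]
    have hsub : (Finset.univ.filter fun h : τ → Fin M =>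
          (∃ t ∈ L x, h t = m₀) ∧ ∃ t ∈ L' y, h t = m₀) ⊆
        ((L x ∩ L' y).biUnion fun t => Finset.univ.filter fun h : τ → Fin M => h t = m₀) ∪
        (((L x ×ˢ L' y).filter fun p => p.1 ≠ p.2).biUnion fun p =>
          Finset.univ.filter fun h : τ → Fin M => h p.1 = m₀ ∧ h p.2 = m₀) := by
      intro h hh
      simp only [Finset.mem_filter, Finset.mem_univ, true_and] at hh
      obtain ⟨⟨s, hs, hs0⟩, t, ht, ht0⟩ := hh
      simp only [Finset.mem_union, Finset.mem_biUnion, Finset.mem_filter, Finset.mem_univ,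
        true_and, Finset.mem_inter, Finset.mem_product, Prod.exists]
      by_cases hst : s = t
      · subst hst
        exact Or.inl ⟨s, ⟨hs, ht⟩, hs0⟩
      · exact Or.inr ⟨s, t, ⟨⟨hs, ht⟩, hst⟩, hs0, ht0⟩
    have hcard : ((Finset.univ.filter fun h : τ → Fin M =>
          (∃ t ∈ L x, h t = m₀) ∧ ∃ t ∈ L' y, h t = m₀).card : ℝ) ≤
        (L x ∩ L' y).card * ((M : ℝ) ^ N / M) + 2 ^ (2 * D) * ((M : ℝ) ^ N / M ^ 2) := by
      have h1 := (Finset.card_le_card hsub).trans (Finset.card_union_le _ _)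
      have h2 : (((L x ∩ L' y).biUnion
          fun t => Finset.univ.filter fun h : τ → Fin M => h t = m₀).card : ℝ) ≤
          (L x ∩ L' y).card * ((M : ℝ) ^ N / M) := by
        calc _ ≤ ((∑ t ∈ L x ∩ L' y,
              (Finset.univ.filter fun h : τ → Fin M => h t = m₀).card : ℕ) : ℝ) := by
              exact_mod_cast Finset.card_biUnion_le
          _ = _ := by
              push_cast
              rw [Finset.sum_congr rfl fun t _ => hsingle t]
              simp
      have h3 : ((((L x ×ˢ L' y).filter fun p => p.1 ≠ p.2).biUnion fun p =>
          Finset.univ.filter fun h : τ → Fin M => h p.1 = m₀ ∧ h p.2 = m₀).card : ℝ) ≤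
          2 ^ (2 * D) * ((M : ℝ) ^ N / M ^ 2) := by
        calc _ ≤ ((∑ p ∈ (L x ×ˢ L' y).filter fun p => p.1 ≠ p.2,
              (Finset.univ.filter fun h : τ → Fin M => h p.1 = m₀ ∧ h p.2 = m₀).card : ℕ) : ℝ) := by
              exact_mod_cast Finset.card_biUnion_le
          _ = (((L x ×ˢ L' y).filter fun p => p.1 ≠ p.2).card : ℝ) * ((M : ℝ) ^ N / M ^ 2) := by
              push_cast
              rw [Finset.sum_congr rfl fun p hp => hpair p.1 p.2 (Finset.mem_filter.1 hp).2]
              simp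
          _ ≤ _ := by
              gcongr
              have : ((L x ×ˢ L' y).filter fun p => p.1 ≠ p.2).card ≤ 2 ^ (2 * D) := by
                refine (Finset.card_filter_le _ _).trans ?_
                rw [Finset.card_product, two_mul, pow_add]
                exact Nat.mul_le_mul (hL x) (hL' y)
              exact_mod_cast this
      calc _ ≤ ((_ + _ : ℕ) : ℝ) := by exact_mod_cast h1
        _ ≤ _ := by
          push_cast
          exact add_le_add h2 h3
    calc _ ≤ (M : ℝ) / M ^ N * ((L x ∩ L' y).card * ((M : ℝ) ^ N / M) +
          2 ^ (2 * D) * ((M : ℝ) ^ N / M ^ 2)) := by gcongr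
      _ = (L x ∩ L' y).card + 2 ^ (2 * D) / M := by field_simp
      _ = (L x ∩ L' y).card + 1 / 32 := by
        have : (M : ℝ) = 2 ^ (2 * D) * 32 := by
          rw [hM]
          push_cast
          rw [pow_add]
          norm_num
        rw [this]
        field_simp

/-! ### From information cost to typical transcripts -/

/-- Mass of the inputs in row `x` on which the transcript is `ℓ`. -/
noncomputable def rowTrMass {X Y : Type} [Fintype Y] (ν : X → Y → ℝ) (P : Protocol X Y)
    (x : X) (ℓ : List Bool) : ℝ :=
  ∑ y, if P.transcript x y = ℓ then ν x y else 0

/-- Mass of the inputs in column `y` on which the transcript is `ℓ`. -/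
noncomputable def colTrMass {X Y : Type} [Fintype X] (ν : X → Y → ℝ) (P : Protocol X Y)
    (y : Y) (ℓ : List Bool) : ℝ :=
  ∑ x, if P.transcript x y = ℓ then ν x y else 0

/-- The transcript on `(x, y)` has conditional probability below `2 ^ (-D)` given `x`,
or given `y`. -/
def AtypicalTr {X Y : Type} [Fintype X] [Fintype Y] (ν : X → Y → ℝ) (P : Protocol X Y)
    (D : ℕ) (x : X) (y : Y) : Prop :=
  2 ^ D * rowTrMass ν P x (P.transcript x y) < ∑ y', ν x y' ∨
  2 ^ D * colTrMass ν P y (P.transcript x y) < ∑ x', ν x' y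

theorem le_rowTrMass {X Y : Type} [Fintype Y] {ν : X → Y → ℝ} (hν : ∀ x y, 0 ≤ ν x y)
    (P : Protocol X Y) (x : X) (y : Y) : ν x y ≤ rowTrMass ν P x (P.transcript x y) := by
  have := Finset.single_le_sum (f := fun y' => if P.transcript x y' = P.transcript x y
    then ν x y' else 0) (fun y' _ => by split_ifs <;> simp [hν]) (Finset.mem_univ y)
  simpa [rowTrMass] using this

theorem le_colTrMass {X Y : Type} [Fintype X] {ν : X → Y → ℝ} (hν : ∀ x y, 0 ≤ ν x y)
    (P : Protocol X Y) (x : X) (y : Y) : ν x y ≤ colTrMass ν P y (P.transcript x y) := by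
  have := Finset.single_le_sum (f := fun x' => if P.transcript x' y = P.transcript x y
    then ν x' y else 0) (fun y' _ => by split_ifs <;> simp [hν]) (Finset.mem_univ x)
  simpa [colTrMass] using this

theorem rowTrMass_le {X Y : Type} [Fintype Y] {ν : X → Y → ℝ} (hν : ∀ x y, 0 ≤ ν x y)
    (P : Protocol X Y) (x : X) (ℓ : List Bool) : rowTrMass ν P x ℓ ≤ ∑ y, ν x y :=
  Finset.sum_le_sum fun y _ => by split_ifs <;> simp [hν]

theorem colTrMass_le {X Y : Type} [Fintype X] {ν : X → Y → ℝ} (hν : ∀ x y, 0 ≤ ν x y)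
    (P : Protocol X Y) (y : Y) (ℓ : List Bool) : colTrMass ν P y ℓ ≤ ∑ x, ν x y :=
  Finset.sum_le_sum fun y _ => by split_ifs <;> simp [hν]

theorem le_mul_logb_ratio {p q c t D' : ℝ} {D : ℕ} (hp : 0 ≤ p) (hq : 0 ≤ q) (hpt : p ≤ t)
    (htc : t ≤ c) (hD : D' = 0 ∨ D' = D ∧ 2 ^ D * t < c) :
    p * q * D' ≤ p * q * Real.logb 2 ((p * q * c) / (p * (q * t))) := by
  rcases eq_or_lt_of_le (mul_nonneg hp hq) with h | h
  · simp [← h]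
  have hp' : 0 < p := pos_of_mul_pos_left h hq
  have hq' : 0 < q := pos_of_mul_pos_right h hp
  have ht : 0 < t := hp'.trans_le hpt
  have e : (p * q * c) / (p * (q * t)) = c / t := by field_simp
  rw [e]
  refine mul_le_mul_of_nonneg_left ?_ h.le
  rcases hD with h0 | ⟨h1, h2⟩
  · rw [h0]
    exact Real.logb_nonneg one_lt_two ((one_le_div ht).2 htc)
  · rw [h1, Real.le_logb_iff_rpow_le one_lt_two (div_pos (ht.trans_le htc) ht),
      Real.rpow_natCast, le_div_iff₀ ht]
    exact h2.le

theorem atypical_mass_le_infoCost {X Y : Type} [Fintype X] [Fintype Y] {ν : X → Y → ℝ}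
    (hν : IsDist2 ν) {m : ℕ} {ρ : Fin m → ℝ}
    (hρ : IsDist ρ) (P : Fin m → Protocol X Y) (D : ℕ) :
    D * ∑ r, ρ r * ∑ x, ∑ y, (if AtypicalTr ν (P r) D x y then ν x y else 0) ≤
      infoCost ν ρ P := by
  obtain ⟨hν0, -⟩ := hν
  obtain ⟨hρ0, hρ1⟩ := hρ
  have lhs : D * ∑ r, ρ r * ∑ x, ∑ y, (if AtypicalTr ν (P r) D x y then ν x y else 0) =
      ∑ ω : X × Y × Fin m, ν ω.1 ω.2.1 * ρ ω.2.2 *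
        (if AtypicalTr ν (P ω.2.2) D ω.1 ω.2.1 then (D : ℝ) else 0) := by
    rw [Fintype.sum_prod_type]
    simp only [Fintype.sum_prod_type, Finset.mul_sum]
    rw [Finset.sum_comm]
    refine Finset.sum_congr rfl fun x _ => ?_
    rw [Finset.sum_comm]
    refine Finset.sum_congr rfl fun y _ => Finset.sum_congr rfl fun r _ => ?_
    split_ifs <;> ring
  have hsumρ : ∀ c : ℝ, ∑ r, c * ρ r = c := fun c => by rw [← Finset.mul_sum, hρ1, mul_one]
  rw [lhs, infoCost, condMI, condMI, ← Finset.sum_add_distrib]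
  refine Finset.sum_le_sum fun ω _ => ?_
  obtain ⟨x, y, r⟩ := ω
  have hx : ∀ a : X × Y × Fin m → ℝ, (∑ ω, a ω) = ∑ x, ∑ y, ∑ r, a (x, y, r) := fun a => by
    simp only [Fintype.sum_prod_type]
  have e1 : prOf (fun ω : X × Y × Fin m => ν ω.1 ω.2.1 * ρ ω.2.2) (fun ω' => ω'.1 = x ∧
      ((ω'.2.2, (P ω'.2.2).transcript ω'.1 ω'.2.1) : Fin m × List Bool) =
        (r, (P r).transcript x y) ∧ ω'.2.1 = y) = ν x y * ρ r := by
    rw [prOf, Finset.sum_eq_single (x, y, r)]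
    · simp
    · rintro ⟨x', y', r'⟩ - hne
      rw [if_neg]
      rintro ⟨h1, h2, h3⟩
      simp only [Prod.mk.injEq] at h1 h2 h3
      exact hne (by rw [h1, h3, h2.1])
    · simp
  have e1' : prOf (fun ω : X × Y × Fin m => ν ω.1 ω.2.1 * ρ ω.2.2) (fun ω' => ω'.2.1 = y ∧
      ((ω'.2.2, (P ω'.2.2).transcript ω'.1 ω'.2.1) : Fin m × List Bool) =
        (r, (P r).transcript x y) ∧ ω'.1 = x) = ν x y * ρ r := by
    rw [← e1]
    congr 1
    funext ω'
    exact propext ⟨fun ⟨h1, h2, h3⟩ => ⟨h3, h2, h1⟩, fun ⟨h1, h2, h3⟩ => ⟨h3, h2, h1⟩⟩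
  have e2 : prOf (fun ω : X × Y × Fin m => ν ω.1 ω.2.1 * ρ ω.2.2) (fun ω' => ω'.2.1 = y) =
      ∑ x', ν x' y := by
    rw [prOf, hx]
    refine Finset.sum_congr rfl fun x' _ => ?_
    rw [Finset.sum_eq_single y (fun y' _ h => by simp [h]) (by simp)]
    simp [hsumρ]
  have e2' : prOf (fun ω : X × Y × Fin m => ν ω.1 ω.2.1 * ρ ω.2.2) (fun ω' => ω'.1 = x) =
      ∑ y', ν x y' := by
    rw [prOf, hx, Finset.sum_eq_single x (fun y' _ h => by simp [h]) (by simp)]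
    simp [hsumρ]
  have e3 : prOf (fun ω : X × Y × Fin m => ν ω.1 ω.2.1 * ρ ω.2.2)
      (fun ω' => ω'.1 = x ∧ ω'.2.1 = y) = ν x y := by
    rw [prOf, hx, Finset.sum_eq_single x (fun y' _ h => by simp [h]) (by simp),
      Finset.sum_eq_single y (fun y' _ h => by simp [h]) (by simp)]
    simp [hsumρ]
  have e3' : prOf (fun ω : X × Y × Fin m => ν ω.1 ω.2.1 * ρ ω.2.2)
      (fun ω' => ω'.2.1 = y ∧ ω'.1 = x) = ν x y := by
    rw [← e3]
    congr 1
    funext ω'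
    exact propext and_comm
  have e4 : prOf (fun ω : X × Y × Fin m => ν ω.1 ω.2.1 * ρ ω.2.2) (fun ω' =>
      ((ω'.2.2, (P ω'.2.2).transcript ω'.1 ω'.2.1) : Fin m × List Bool) =
        (r, (P r).transcript x y) ∧ ω'.2.1 = y) =
      ρ r * colTrMass ν (P r) y ((P r).transcript x y) := by
    rw [prOf, hx, colTrMass, Finset.mul_sum]
    refine Finset.sum_congr rfl fun x' _ => ?_
    rw [Finset.sum_eq_single y (fun y' _ h => by simp [h]) (by simp),
      Finset.sum_eq_single r (fun r' _ h => by simp [h]) (by simp)]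
    simp [mul_comm]
  have e4' : prOf (fun ω : X × Y × Fin m => ν ω.1 ω.2.1 * ρ ω.2.2) (fun ω' =>
      ((ω'.2.2, (P ω'.2.2).transcript ω'.1 ω'.2.1) : Fin m × List Bool) =
        (r, (P r).transcript x y) ∧ ω'.1 = x) =
      ρ r * rowTrMass ν (P r) x ((P r).transcript x y) := by
    rw [prOf, hx, rowTrMass, Finset.mul_sum,
      Finset.sum_eq_single x (fun y' _ h => by simp [h]) (by simp)]
    refine Finset.sum_congr rfl fun y' _ => ?_
    rw [Finset.sum_eq_single r (fun r' _ h => by simp [h]) (by simp)]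
    simp [mul_comm]
  simp only
  rw [e1, e2, e3, e4, e1', e2', e3', e4']
  have hA : ν x y * ρ r * (if 2 ^ D * colTrMass ν (P r) y ((P r).transcript x y) < ∑ x', ν x' y
      then (D : ℝ) else 0) ≤ _ :=
    le_mul_logb_ratio (hν0 x y) (hρ0 r) (le_colTrMass hν0 (P r) x y) (colTrMass_le hν0 (P r) y _)
      (D := D) (by split_ifs with h <;> simp [h])
  have hB : ν x y * ρ r * (if 2 ^ D * rowTrMass ν (P r) x ((P r).transcript x y) < ∑ y', ν x y'
      then (D : ℝ) else 0) ≤ _ :=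
    le_mul_logb_ratio (hν0 x y) (hρ0 r) (le_rowTrMass hν0 (P r) x y) (rowTrMass_le hν0 (P r) x _)
      (D := D) (by split_ifs with h <;> simp [h])
  refine le_trans ?_ (add_le_add hA hB)
  rw [← mul_add]
  refine mul_le_mul_of_nonneg_left ?_ (mul_nonneg (hν0 x y) (hρ0 r))
  have hD : (0 : ℝ) ≤ D := Nat.cast_nonneg D
  unfold AtypicalTr
  split_ifs <;> first | linarith | tauto

/-! ### From protocols to covers by rectangles -/

theorem card_le_two_pow_of_mass {τ : Type} {L : Finset τ} {mass : τ → ℝ} {c : ℝ} {D : ℕ}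
    (hpos : ∀ ℓ ∈ L, 0 < mass ℓ) (hle : ∀ ℓ ∈ L, c ≤ 2 ^ D * mass ℓ)
    (hsum : ∑ ℓ ∈ L, mass ℓ ≤ c) : L.card ≤ 2 ^ D := by
  rcases L.eq_empty_or_nonempty with rfl | hL
  · simp
  have hc : 0 < c := (Finset.sum_pos hpos hL).trans_le hsum
  have h : (L.card : ℝ) * c ≤ 2 ^ D * c := by
    calc (L.card : ℝ) * c = ∑ ℓ ∈ L, c := by simp
      _ ≤ ∑ ℓ ∈ L, 2 ^ D * mass ℓ := Finset.sum_le_sum hle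
      _ = 2 ^ D * ∑ ℓ ∈ L, mass ℓ := by rw [Finset.mul_sum]
      _ ≤ 2 ^ D * c := by gcongr
  exact_mod_cast le_of_mul_le_mul_right h hc

theorem sum_fiber_mass_le {α τ : Type} [Fintype α] (L : Finset τ) (g : α → List Bool)
    (e : τ → List Bool) (he : Function.Injective e) {p : α → ℝ} (hp : ∀ a, 0 ≤ p a) :
    ∑ ℓ ∈ L, ∑ a, (if g a = e ℓ then p a else 0) ≤ ∑ a, p a := by
  rw [Finset.sum_comm]
  refine Finset.sum_le_sum fun a _ => ?_
  by_cases h : ∃ ℓ ∈ L, g a = e ℓ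
  · obtain ⟨ℓ, hℓ, hg⟩ := h
    rw [Finset.sum_eq_single_of_mem ℓ hℓ fun ℓ' _ hne => if_neg fun h' =>
      hne (he (h'.symm.trans hg)), if_pos hg]
  · push Not at h
    rw [Finset.sum_eq_zero fun ℓ hℓ => if_neg (h ℓ hℓ)]
    exact hp a

theorem exists_rcov_of_protocol {X Y : Type} [Fintype X] [Fintype Y] (f : X → Y → Bool)
    (z : Bool) {ν : X → Y → ℝ} (hν : IsDist2 ν) (P : Protocol X Y) (D : ℕ) :
    ∃ v : Finset X × Finset Y → ℝ, (∀ R, 0 ≤ v R) ∧ ∑ R, v R ≤ 2 ^ (2 * D + 5) ∧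
      (∀ x y, rcov v x y ≤ 1) ∧
      ∑ x, ∑ y, ν x y * (if f x y = z then 1 - rcov v x y else rcov v x y) ≤
        commErr ν f P + (∑ x, ∑ y, if AtypicalTr ν P D x y then ν x y else 0) + 1 / 16 := by
  obtain ⟨hν0, hν1⟩ := hν
  obtain ⟨τ, _, e, tr, he, htr⟩ : ∃ (τ : Type) (_ : Fintype τ) (e : τ → List Bool)
      (tr : X → Y → τ), Function.Injective e ∧ ∀ x y, e (tr x y) = P.transcript x y :=
    ⟨Set.range fun p : X × Y => P.transcript p.1 p.2, Fintype.ofFinite _, Subtype.val,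
      fun x y => ⟨P.transcript x y, (x, y), rfl⟩, Subtype.val_injective, fun x y => rfl⟩
  let L : X → Finset τ := fun x => Finset.univ.filter fun ℓ =>
    (0 < rowTrMass ν P x (e ℓ) ∧ ∑ y, ν x y ≤ 2 ^ D * rowTrMass ν P x (e ℓ)) ∧
      ∃ x' y', P.transcript x' y' = e ℓ ∧ P.eval x' y' = z
  let L' : Y → Finset τ := fun y => Finset.univ.filter fun ℓ =>
    0 < colTrMass ν P y (e ℓ) ∧ ∑ x, ν x y ≤ 2 ^ D * colTrMass ν P y (e ℓ)
  have hL : ∀ x, (L x).card ≤ 2 ^ D := fun x =>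
    card_le_two_pow_of_mass (mass := fun ℓ : τ => rowTrMass ν P x (e ℓ)) (c := ∑ y, ν x y)
      (fun ℓ hℓ => (Finset.mem_filter.1 hℓ).2.1.1) (fun ℓ hℓ => (Finset.mem_filter.1 hℓ).2.1.2)
      (sum_fiber_mass_le (L x) _ _ he fun y => hν0 x y)
  have hL' : ∀ y, (L' y).card ≤ 2 ^ D := fun y =>
    card_le_two_pow_of_mass (mass := fun ℓ : τ => colTrMass ν P y (e ℓ)) (c := ∑ x, ν x y)
      (fun ℓ hℓ => (Finset.mem_filter.1 hℓ).2.1) (fun ℓ hℓ => (Finset.mem_filter.1 hℓ).2.2)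
      (sum_fiber_mass_le (L' y) _ _ he fun x => hν0 x y)
  have hinter : ∀ x y, L x ∩ L' y ⊆ {tr x y} := by
    intro x y ℓ hℓ
    simp only [L, L', Finset.mem_inter, Finset.mem_filter, Finset.mem_univ, true_and] at hℓ
    obtain ⟨⟨⟨h1, -⟩, -⟩, h2, -⟩ := hℓ
    obtain ⟨y', hy'⟩ : ∃ y', P.transcript x y' = e ℓ := by
      by_contra! h
      simp [rowTrMass, h] at h1
    obtain ⟨x', hx'⟩ : ∃ x', P.transcript x' y = e ℓ := by
      by_contra! h
      simp [colTrMass, h] at h2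
    rw [Finset.mem_singleton]
    refine he ?_
    rw [htr, ← hy']
    exact (P.transcript_rect (hy'.trans hx'.symm)).symm
  have hcard : ∀ x y, ((L x ∩ L' y).card : ℝ) ≤ 1 := fun x y => by
    have := Finset.card_le_card (hinter x y)
    rw [Finset.card_singleton] at this
    exact_mod_cast this
  obtain ⟨v, hv0, hvs, hv⟩ := exists_rcov_of_lists L L' D hL hL'
  have hscale : ∀ x y, rcov (fun R => 32 / 33 * v R) x y = 32 / 33 * rcov v x y := fun x y => by
    simp only [rcov, Finset.mul_sum, mul_ite, mul_zero]
  have hrc : ∀ x y, 0 ≤ rcov v x y := fun x y =>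
    Finset.sum_nonneg fun R _ => by split_ifs <;> simp [hv0]
  refine ⟨fun R => 32 / 33 * v R, fun R => mul_nonneg (by norm_num) (hv0 R), ?_, fun x y => ?_, ?_⟩
  · rw [← Finset.mul_sum, hvs]
    have : (0 : ℝ) < 2 ^ (2 * D + 5) := by positivity
    linarith
  · rw [hscale]
    have := (hv x y).2
    have := hcard x y
    linarith
  · have hpt : ∀ x y, ν x y * (if f x y = z then 1 - rcov (fun R => 32 / 33 * v R) x y
        else rcov (fun R => 32 / 33 * v R) x y) ≤ (if P.eval x y ≠ f x y then ν x y else 0) +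
          (if AtypicalTr ν P D x y then ν x y else 0) + 1 / 16 * ν x y := by
      intro x y
      rcases eq_or_lt_of_le (hν0 x y) with h0 | h0
      · simp [← h0]
      rw [hscale]
      have key : (if f x y = z then 1 - 32 / 33 * rcov v x y else 32 / 33 * rcov v x y) ≤
          (if P.eval x y ≠ f x y then 1 else 0) + (if AtypicalTr ν P D x y then 1 else 0) +
            1 / 16 := by
        have hub := (hv x y).2
        have h1 := hcard x y
        have hnn := hrc x y
        by_cases hev : P.eval x y = f x y
        · by_cases hb : AtypicalTr ν P D x y
          · rw [if_neg (not_not.2 hev), if_pos hb]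
            split_ifs <;> linarith
          · rw [if_neg (not_not.2 hev), if_neg hb]
            split_ifs with hz
            · have hmem : (L x ∩ L' y).Nonempty := by
                refine ⟨tr x y, ?_⟩
                unfold AtypicalTr at hb
                push Not at hb
                simp only [L, L', htr, Finset.mem_inter, Finset.mem_filter, Finset.mem_univ,
                  true_and]
                exact ⟨⟨⟨h0.trans_le (le_rowTrMass hν0 P x y), hb.1⟩, x, y, rfl, hev.trans hz⟩,
                  h0.trans_le (le_colTrMass hν0 P x y), hb.2⟩
              have := (hv x y).1 hmem
              linarith
            · have hemp : L x ∩ L' y = ∅ := by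
                rw [Finset.eq_empty_iff_forall_notMem]
                intro ℓ hℓ
                have h2 := Finset.mem_singleton.1 (hinter x y hℓ)
                simp only [L, Finset.mem_inter, Finset.mem_filter, Finset.mem_univ,
                  true_and] at hℓ
                obtain ⟨⟨-, x', y', ht, hz'⟩, -⟩ := hℓ
                rw [h2, htr] at ht
                exact hz (hev.symm.trans ((P.eval_eq_of_transcript_eq ht).symm.trans hz'))
              rw [hemp, Finset.card_empty, Nat.cast_zero] at hub
              linarith
        · rw [if_pos hev]
          have : (0 : ℝ) ≤ if AtypicalTr ν P D x y then 1 else 0 := by split_ifs <;> norm_num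
          split_ifs <;> linarith
      refine (mul_le_mul_of_nonneg_left key h0.le).trans_eq ?_
      simp only [mul_add, mul_ite, mul_one, mul_zero]
      ring
    refine (Finset.sum_le_sum fun x _ => Finset.sum_le_sum fun y _ => hpt x y).trans_eq ?_
    simp only [Finset.sum_add_distrib, ← Finset.mul_sum, hν1, commErr]
    norm_num

/-- A low-information randomized protocol yields, for every input distribution, a light
weighting of rectangles covering `f⁻¹(z)` well and its complement poorly on average. -/
theorem exists_rcov_of_infoCost {X Y : Type} [Fintype X] [Fintype Y] (f : X → Y → Bool)
    (z : Bool) {ν : X → Y → ℝ} (hν : IsDist2 ν) {m : ℕ} {ρ : Fin m → ℝ} (hρ : IsDist ρ)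
    (P : Fin m → Protocol X Y) (herr : randErr ν f ρ P ≤ 1 / 8) {D : ℕ} (hD : 0 < D)
    (hinfo : 32 * infoCost ν ρ P ≤ D) :
    ∃ v : Finset X × Finset Y → ℝ, (∀ R, 0 ≤ v R) ∧ ∑ R, v R ≤ 2 ^ (2 * D + 5) ∧
      (∀ x y, rcov v x y ≤ 1) ∧
      ∑ x, ∑ y, ν x y * (if f x y = z then 1 - rcov v x y else rcov v x y) < 1 / 4 := by
  have hat := atypical_mass_le_infoCost hν hρ P D
  have hDR : (0 : ℝ) < D := by exact_mod_cast hD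
  have hbad : ∑ r, ρ r * ∑ x, ∑ y, (if AtypicalTr ν (P r) D x y then ν x y else 0) ≤ 1 / 32 := by
    have : D * ∑ r, ρ r * ∑ x, ∑ y, (if AtypicalTr ν (P r) D x y then ν x y else 0) ≤
        D * (1 / 32) := by linarith
    exact le_of_mul_le_mul_left this hDR
  have herr' : ∑ r, ρ r * commErr ν f (P r) ≤ 1 / 8 := by
    refine le_trans (le_of_eq ?_) herr
    simp only [commErr, randErr, Finset.mul_sum]
    rw [Finset.sum_comm]
    refine Finset.sum_congr rfl fun x _ => ?_
    rw [Finset.sum_comm]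
    refine Finset.sum_congr rfl fun y _ => Finset.sum_congr rfl fun r _ => ?_
    split_ifs <;> ring
  obtain ⟨r, hr⟩ : ∃ r, commErr ν f (P r) +
      (∑ x, ∑ y, if AtypicalTr ν (P r) D x y then ν x y else 0) ≤ 5 / 32 := by
    by_contra! h
    have h1 : ∑ r, ρ r * (5 / 32) < ∑ r, ρ r * (commErr ν f (P r) +
        ∑ x, ∑ y, if AtypicalTr ν (P r) D x y then ν x y else 0) := by
      obtain ⟨r, hr⟩ : ∃ r, 0 < ρ r := by
        by_contra! h'
        have := Finset.sum_nonpos fun r (_ : r ∈ Finset.univ) => h' r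
        rw [hρ.2] at this
        norm_num at this
      exact Finset.sum_lt_sum (fun r _ => mul_le_mul_of_nonneg_left (h r).le (hρ.1 r))
        ⟨r, Finset.mem_univ r, mul_lt_mul_of_pos_left (h r) hr⟩
    rw [← Finset.sum_mul, hρ.2] at h1
    simp only [mul_add, Finset.sum_add_distrib] at h1
    linarith
  obtain ⟨v, h1, h2, h3, h4⟩ := exists_rcov_of_protocol f z hν (P r) D
  exact ⟨v, h1, h2, h3, by linarith⟩

theorem exists_infoCost_lt {X Y : Type} [Fintype X] [Fintype Y] {f : X → Y → Bool}
    {ν : X → Y → ℝ} (hν : IsDist2 ν) (hIC : 0 < IC f (1 / 8)) {c : ℝ} (hc : IC f (1 / 8) < c) :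
    ∃ (m : ℕ) (ρ : Fin m → ℝ) (P : Fin m → Protocol X Y),
      IsDist ρ ∧ randErr ν f ρ P ≤ 1 / 8 ∧ infoCost ν ρ P < c := by
  have hbdd : BddAbove { c : ℝ | ∃ μ : X → Y → ℝ, IsDist2 μ ∧ c = ICmu μ f (1 / 8) } := by
    by_contra h
    rw [IC, Real.sSup_of_not_bddAbove h] at hIC
    exact lt_irrefl _ hIC
  have hle : ICmu ν f (1 / 8) < c := (le_csSup hbdd ⟨ν, hν, rfl⟩).trans_lt hc
  obtain ⟨P, hP⟩ := Protocol.exists_eval_eq f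
  have hne : { c : ℝ | ∃ (m : ℕ) (ρ : Fin m → ℝ) (P : Fin m → Protocol X Y),
      IsDist ρ ∧ randErr ν f ρ P ≤ 1 / 8 ∧ c = infoCost ν ρ P }.Nonempty :=
    ⟨_, 1, fun _ => 1, fun _ => P, ⟨fun _ => zero_le_one, by simp⟩, by simp [randErr, hP], rfl⟩
  obtain ⟨-, ⟨m, ρ, P', h1, h2, rfl⟩, h3⟩ := exists_lt_of_csInf_lt hne hle
  exact ⟨m, ρ, P', h1, h2, h3⟩

/-- Minimax: a light weighting of rectangles that works on every input. -/
theorem exists_rcov_of_forall_dist {X Y : Type} [Fintype X] [Fintype Y] (f : X → Y → Bool)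
    (z : Bool) {W a : ℝ} (hW : 0 ≤ W) (ha : 0 < a)
    (H : ∀ ν : X → Y → ℝ, IsDist2 ν →
      ∃ v : Finset X × Finset Y → ℝ, (∀ R, 0 ≤ v R) ∧ ∑ R, v R ≤ W ∧ (∀ x y, rcov v x y ≤ 1) ∧
        ∑ x, ∑ y, ν x y * (if f x y = z then 1 - rcov v x y else rcov v x y) < a) :
    ∃ v : Finset X × Finset Y → ℝ, (∀ R, 0 ≤ v R) ∧ ∑ R, v R ≤ W ∧ (∀ x y, rcov v x y ≤ 1) ∧
      ∀ x y, (if f x y = z then 1 - rcov v x y else rcov v x y) < a := by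
  by_contra! hno
  let V : Set (Finset X × Finset Y → ℝ) :=
    {v | (∀ R, 0 ≤ v R) ∧ ∑ R, v R ≤ W ∧ ∀ x y, rcov v x y ≤ 1}
  let G : (Finset X × Finset Y → ℝ) → (X × Y → ℝ) :=
    fun v p => if f p.1 p.2 = z then 1 - rcov v p.1 p.2 else rcov v p.1 p.2
  have hcomb : ∀ (u v : Finset X × Finset Y → ℝ) (s t : ℝ) (x : X) (y : Y),
      rcov (s • u + t • v) x y = s * rcov u x y + t * rcov v x y := by
    intro u v s t x y
    simp only [rcov, Finset.mul_sum, ← Finset.sum_add_distrib]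
    refine Finset.sum_congr rfl fun R _ => ?_
    split_ifs <;> simp
  let A : Set (X × Y → ℝ) := {p | ∀ i, p i < a}
  have hAo : IsOpen A := by
    have : A = ⋂ i, {p : X × Y → ℝ | p i < a} := by
      ext
      simp [A]
    rw [this]
    exact isOpen_iInter_of_finite fun i => isOpen_lt (continuous_apply i) continuous_const
  have hAc : Convex ℝ A := by
    have : A = ⋂ i, {p : X × Y → ℝ | p i < a} := by
      ext
      simp [A]
    rw [this]
    exact convex_iInter fun i => convex_halfSpace_lt (IsLinearMap.mk (by simp) (by simp)) a
  have hBc : Convex ℝ (G '' V) := by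
    rintro _ ⟨u, ⟨hu0, hus, hu1⟩, rfl⟩ _ ⟨v, ⟨hv0, hvs, hv1⟩, rfl⟩ s t hs ht hst
    refine ⟨s • u + t • v, ⟨fun R => ?_, ?_, fun x y => ?_⟩, ?_⟩
    · have := mul_nonneg hs (hu0 R)
      have := mul_nonneg ht (hv0 R)
      simp only [Pi.add_apply, Pi.smul_apply, smul_eq_mul]
      positivity
    · simp only [Pi.add_apply, Pi.smul_apply, smul_eq_mul, Finset.sum_add_distrib,
        ← Finset.mul_sum]
      calc _ ≤ s * W + t * W := by gcongr
        _ = W := by rw [← add_mul, hst, one_mul]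
    · rw [hcomb]
      calc _ ≤ s * 1 + t * 1 := by
            gcongr
            exacts [hu1 x y, hv1 x y]
        _ = 1 := by rw [← add_mul, hst, one_mul]
    · funext p
      simp only [G, hcomb, Pi.add_apply, Pi.smul_apply, smul_eq_mul]
      split_ifs
      · linear_combination -hst
      · rfl
  have hdisj : Disjoint A (G '' V) := by
    rw [Set.disjoint_left]
    rintro _ hA ⟨v, ⟨h0, hs, h1⟩, rfl⟩
    obtain ⟨x, y, hxy⟩ := hno v h0 hs h1
    exact absurd (hA (x, y)) (not_lt.2 hxy)
  obtain ⟨φ, u, hφA, hφB⟩ := geometric_hahn_banach_open hAc hAo hBc hdisj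
  set q : X × Y → ℝ := fun i => φ (Pi.single i 1) with hq
  have hφ : ∀ p, φ p = ∑ i, p i * q i := by
    intro p
    conv_lhs => rw [← Finset.univ_sum_single p]
    rw [map_sum]
    refine Finset.sum_congr rfl fun i _ => ?_
    have : (Pi.single i (p i) : X × Y → ℝ) = p i • Pi.single i 1 := by
      rw [← Pi.single_smul, smul_eq_mul, mul_one]
    rw [this, map_smul, smul_eq_mul]
  have hu : 0 < u := by
    have := hφA 0 fun i => ha
    simpa using this
  have hq0 : ∀ i, 0 ≤ q i := by
    intro i
    by_contra! h
    have hmem : Pi.single i (u / q i) ∈ A := by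
      intro j
      by_cases hj : j = i
      · subst hj
        rw [Pi.single_eq_same]
        exact (div_neg_of_pos_of_neg hu h).trans ha
      · rw [Pi.single_eq_of_ne hj]
        exact ha
    have := hφA _ hmem
    rw [hφ, Finset.sum_eq_single i (fun j _ hj => by rw [Pi.single_eq_of_ne hj, zero_mul])
      (by simp), Pi.single_eq_same, div_mul_cancel₀ _ h.ne] at this
    exact lt_irrefl _ this
  have hsup : a * ∑ i, q i ≤ u := by
    refine le_of_forall_lt fun c hc => ?_
    rcases (Finset.sum_nonneg fun i (_ : i ∈ Finset.univ) => hq0 i).eq_or_lt with h0 | h0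
    · rw [← h0, mul_zero] at hc
      exact hc.trans hu
    · have : (fun _ => c / ∑ i, q i) ∈ A := fun i => (div_lt_iff₀ h0).2 hc
      have := hφA _ this
      rwa [hφ, ← Finset.mul_sum, div_mul_cancel₀ _ h0.ne'] at this
  have hqs : 0 < ∑ i, q i := by
    refine (Finset.sum_nonneg fun i _ => hq0 i).lt_of_ne' fun h => ?_
    have hz : ∀ i, q i = 0 := fun i =>
      (Finset.sum_eq_zero_iff_of_nonneg fun i _ => hq0 i).1 h i (Finset.mem_univ i)
    rcases isEmpty_or_nonempty (X × Y) with he | ⟨⟨x₀, y₀⟩⟩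
    · obtain ⟨x, y, -⟩ := hno 0 (by simp) (by simpa using hW)
        (fun x y => (he.false (x, y)).elim)
      exact he.false (x, y)
    · obtain ⟨v, h0, hs, h1, -⟩ := H (fun x y => if x = x₀ ∧ y = y₀ then 1 else 0)
        ⟨fun x y => by dsimp only; split_ifs <;> norm_num, by
          rw [Finset.sum_eq_single x₀ (by intros; simp [*]) (by simp)]
          simp⟩
      have := hφB _ ⟨v, ⟨h0, hs, h1⟩, rfl⟩
      rw [hφ] at this
      simp only [hz, mul_zero, Finset.sum_const_zero] at this
      linarith
  obtain ⟨v, h0, hs, h1, hlt⟩ := H (fun x y => q (x, y) / ∑ i, q i)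
    ⟨fun x y => div_nonneg (hq0 _) hqs.le, by
      rw [← Fintype.sum_prod_type', ← Finset.sum_div]
      exact div_self hqs.ne'⟩
  have h2 := hφB _ ⟨v, ⟨h0, hs, h1⟩, rfl⟩
  rw [hφ] at h2
  rw [← Fintype.sum_prod_type'
    (f := fun x y => q (x, y) / (∑ i, q i) * (if f x y = z then 1 - rcov v x y else rcov v x y))]
    at hlt
  have e : ∑ p : X × Y, q (p.1, p.2) / (∑ i, q i) *
      (if f p.1 p.2 = z then 1 - rcov v p.1 p.2 else rcov v p.1 p.2) =
      (∑ p, G v p * q p) / ∑ i, q i := by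
    rw [Finset.sum_div]
    exact Finset.sum_congr rfl fun p _ => by
      simp only [G]
      ring
  rw [e, div_lt_iff₀ hqs] at hlt
  linarith

/-! ### Sums over rectangles -/

/-- Integral of `φ` over the rectangle `A ×ˢ B` under the product of `μA` and `μB`. -/
noncomputable def rectSum {X Y : Type} (μA : X → ℝ) (μB : Y → ℝ) (A : Finset X) (B : Finset Y)
    (φ : X → Y → ℝ) : ℝ :=
  ∑ x ∈ A, ∑ y ∈ B, μA x * μB y * φ x y

/-- Mass of the points of `A ×ˢ B` where `g` differs from `f`. -/
noncomputable def rectErr {X Y : Type} (μA : X → ℝ) (μB : Y → ℝ) (f : X → Y → Bool)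
    (A : Finset X) (B : Finset Y) (g : X → Y → Bool) : ℝ :=
  rectSum μA μB A B fun x y => if g x y ≠ f x y then 1 else 0

section RectSum

variable {X Y : Type} {μA : X → ℝ} {μB : Y → ℝ}

theorem rectSum_sdiff_left {S A : Finset X} (h : S ⊆ A) (B : Finset Y) (φ : X → Y → ℝ) :
    rectSum μA μB A B φ = rectSum μA μB S B φ + rectSum μA μB (A \ S) B φ := by
  simp only [rectSum]
  rw [add_comm, Finset.sum_sdiff h]

theorem rectSum_sdiff_right {T B : Finset Y} (h : T ⊆ B) (A : Finset X) (φ : X → Y → ℝ) :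
    rectSum μA μB A B φ = rectSum μA μB A T φ + rectSum μA μB A (B \ T) φ := by
  simp only [rectSum]
  rw [← Finset.sum_add_distrib]
  exact Finset.sum_congr rfl fun x _ => by rw [add_comm, Finset.sum_sdiff h]

theorem rectSum_congr {A : Finset X} {B : Finset Y} {φ ψ : X → Y → ℝ}
    (h : ∀ x ∈ A, ∀ y ∈ B, φ x y = ψ x y) : rectSum μA μB A B φ = rectSum μA μB A B ψ :=
  Finset.sum_congr rfl fun x hx => Finset.sum_congr rfl fun y hy => by rw [h x hx y hy]

theorem rectSum_mono (hA : ∀ x, 0 ≤ μA x) (hB : ∀ y, 0 ≤ μB y) (A : Finset X) (B : Finset Y)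
    {φ ψ : X → Y → ℝ} (h : ∀ x y, φ x y ≤ ψ x y) :
    rectSum μA μB A B φ ≤ rectSum μA μB A B ψ :=
  Finset.sum_le_sum fun x _ => Finset.sum_le_sum fun y _ =>
    mul_le_mul_of_nonneg_left (h x y) (mul_nonneg (hA x) (hB y))

theorem rectSum_nonneg (hA : ∀ x, 0 ≤ μA x) (hB : ∀ y, 0 ≤ μB y) (A : Finset X) (B : Finset Y)
    {φ : X → Y → ℝ} (h : ∀ x y, 0 ≤ φ x y) : 0 ≤ rectSum μA μB A B φ :=
  Finset.sum_nonneg fun x _ => Finset.sum_nonneg fun y _ =>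
    mul_nonneg (mul_nonneg (hA x) (hB y)) (h x y)

theorem rectSum_add (A : Finset X) (B : Finset Y) (φ ψ : X → Y → ℝ) :
    rectSum μA μB A B (fun x y => φ x y + ψ x y) =
      rectSum μA μB A B φ + rectSum μA μB A B ψ := by
  simp only [rectSum, mul_add, Finset.sum_add_distrib]

theorem rectSum_const_mul (A : Finset X) (B : Finset Y) (c : ℝ) (φ : X → Y → ℝ) :
    rectSum μA μB A B (fun x y => c * φ x y) = c * rectSum μA μB A B φ := by
  simp only [rectSum, Finset.mul_sum]
  exact Finset.sum_congr rfl fun x _ => Finset.sum_congr rfl fun y _ => by ring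

theorem rectSum_const (A : Finset X) (B : Finset Y) (c : ℝ) :
    rectSum μA μB A B (fun _ _ => c) = c * ((∑ x ∈ A, μA x) * ∑ y ∈ B, μB y) := by
  simp only [rectSum]
  rw [Finset.sum_mul_sum, Finset.mul_sum]
  refine Finset.sum_congr rfl fun x _ => ?_
  rw [Finset.mul_sum]
  exact Finset.sum_congr rfl fun y _ => by ring

theorem rectSum_ite_mem_mul {ψ : X → Y → ℝ} (A S : Finset X) (B T : Finset Y) :
    rectSum μA μB A B (fun x y => if x ∈ S ∧ y ∈ T then ψ x y else 0) =
      rectSum μA μB (S ∩ A) (T ∩ B) ψ := by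
  simp only [rectSum, Finset.inter_comm _ A, Finset.inter_comm _ B]
  rw [← Finset.filter_mem_eq_inter, ← Finset.filter_mem_eq_inter, Finset.sum_filter]
  refine Finset.sum_congr rfl fun x _ => ?_
  by_cases hx : x ∈ S
  · simp [hx, Finset.sum_filter]
  · simp [hx]

theorem rectSum_cover_mul {ι : Type} [Fintype ι] (w : ι → ℝ) (S : ι → Finset X)
    (T : ι → Finset Y) (A : Finset X) (B : Finset Y) (ψ : X → Y → ℝ) :
    rectSum μA μB A B (fun x y => cover w S T x y * ψ x y) =
      ∑ i, w i * rectSum μA μB (S i ∩ A) (T i ∩ B) ψ := by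
  have e : ∀ i, w i * rectSum μA μB (S i ∩ A) (T i ∩ B) ψ = ∑ x ∈ A, ∑ y ∈ B,
      w i * (μA x * μB y * if x ∈ S i ∧ y ∈ T i then ψ x y else 0) := fun i => by
    rw [← rectSum_ite_mem_mul]
    simp only [rectSum, Finset.mul_sum]
  simp only [e]
  rw [Finset.sum_comm]
  refine Finset.sum_congr rfl fun x _ => ?_
  rw [Finset.sum_comm]
  refine Finset.sum_congr rfl fun y _ => ?_
  simp only [cover, Finset.mul_sum, Finset.sum_mul]
  refine Finset.sum_congr rfl fun i _ => ?_
  split_ifs <;> ring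

theorem rectSum_cover {ι : Type} [Fintype ι] (w : ι → ℝ) (S : ι → Finset X)
    (T : ι → Finset Y) (A : Finset X) (B : Finset Y) :
    rectSum μA μB A B (cover w S T) =
      ∑ i, w i * ((∑ x ∈ S i ∩ A, μA x) * ∑ y ∈ T i ∩ B, μB y) := by
  have := rectSum_cover_mul (μA := μA) (μB := μB) w S T A B fun _ _ => 1
  simpa only [mul_one, rectSum_const, one_mul] using this

theorem rectErr_le_mass (hA : ∀ x, 0 ≤ μA x) (hB : ∀ y, 0 ≤ μB y) (f : X → Y → Bool)
    (A : Finset X) (B : Finset Y) (g : X → Y → Bool) :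
    rectErr μA μB f A B g ≤ (∑ x ∈ A, μA x) * ∑ y ∈ B, μB y := by
  rw [← one_mul (_ * _), ← rectSum_const]
  exact rectSum_mono hA hB A B fun x y => by split_ifs <;> norm_num

/-- Gluing protocols: if every rectangle can be handled up to cutting off a noticeable strip
that is handled too, then every rectangle can be handled by repeated cutting. -/
theorem exists_chain (hA : ∀ x, 0 ≤ μA x) (hB : ∀ y, 0 ≤ μB y) (f : X → Y → Bool)
    {φ : X → Y → ℝ} (hφ : ∀ x y, 0 ≤ φ x y) {ρ : ℝ} (hρ : ρ ≤ 1) {d : ℕ}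
    (H : ∀ (A : Finset X) (B : Finset Y),
      (∃ P : Protocol X Y, P.depth ≤ d ∧ rectErr μA μB f A B P.eval ≤ rectSum μA μB A B φ) ∨
      (∃ S ⊆ A, ρ * ∑ x ∈ A, μA x ≤ ∑ x ∈ S, μA x ∧ ∃ P : Protocol X Y, P.depth ≤ d ∧
        rectErr μA μB f S B P.eval ≤ rectSum μA μB S B φ) ∨
      (∃ T ⊆ B, ρ * ∑ y ∈ B, μB y ≤ ∑ y ∈ T, μB y ∧ ∃ P : Protocol X Y, P.depth ≤ d ∧
        rectErr μA μB f A T P.eval ≤ rectSum μA μB A T φ)) (n : ℕ) :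
    ∀ (A : Finset X) (B : Finset Y), ∃ (g : X → ℕ) (h : Y → ℕ) (Q : ℕ → ℕ → Protocol X Y),
      (∀ x, g x ≤ n) ∧ (∀ y, h y ≤ n) ∧ (∀ i j, (Q i j).depth ≤ d) ∧
      rectErr μA μB f A B (fun x y => (Q (g x) (h y)).eval x y) ≤
        rectSum μA μB A B φ + (1 - ρ) ^ n * ((∑ x ∈ A, μA x) * ∑ y ∈ B, μB y) := by
  have hmA : ∀ A : Finset X, 0 ≤ ∑ x ∈ A, μA x := fun A => Finset.sum_nonneg fun x _ => hA x
  have hmB : ∀ B : Finset Y, 0 ≤ ∑ y ∈ B, μB y := fun B => Finset.sum_nonneg fun y _ => hB y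
  induction n with
  | zero =>
    intro A B
    refine ⟨fun _ => 0, fun _ => 0, fun _ _ => .leaf true, fun _ => le_rfl, fun _ => le_rfl,
      fun _ _ => Nat.zero_le _, ?_⟩
    rw [pow_zero, one_mul]
    exact (rectErr_le_mass hA hB f A B _).trans
      (le_add_of_nonneg_left (rectSum_nonneg hA hB A B hφ))
  | succ n ih =>
    intro A B
    rcases H A B with ⟨P, hPd, hP⟩ | ⟨S, hS, hρS, P, hPd, hP⟩ | ⟨T, hT, hρT, P, hPd, hP⟩
    · refine ⟨fun _ => 0, fun _ => 0, fun _ _ => P, fun _ => Nat.zero_le _,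
        fun _ => Nat.zero_le _, fun _ _ => hPd, hP.trans (le_add_of_nonneg_right ?_)⟩
      have := hmA A
      have := hmB B
      have : 0 ≤ 1 - ρ := by linarith
      positivity
    · obtain ⟨g, h, Q, hg, hh, hQ, hQe⟩ := ih (A \ S) B
      refine ⟨fun x => if x ∈ S then 0 else g x + 1, h, fun i j => if i = 0 then P else Q (i - 1) j,
        fun x => ?_, fun y => (hh y).trans n.le_succ, fun i j => ?_, ?_⟩
      · dsimp only
        split_ifs
        exacts [Nat.zero_le _, Nat.succ_le_succ (hg x)]
      · dsimp only
        split_ifs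
        exacts [hPd, hQ _ _]
      · have e1 : rectErr μA μB f S B (fun x y => (if (if x ∈ S then 0 else g x + 1) = 0 then P
            else Q ((if x ∈ S then 0 else g x + 1) - 1) (h y)).eval x y) =
            rectErr μA μB f S B P.eval :=
          rectSum_congr fun x hx y _ => by simp [hx]
        have e2 : rectErr μA μB f (A \ S) B (fun x y => (if (if x ∈ S then 0 else g x + 1) = 0
            then P else Q ((if x ∈ S then 0 else g x + 1) - 1) (h y)).eval x y) =
            rectErr μA μB f (A \ S) B fun x y => (Q (g x) (h y)).eval x y :=
          rectSum_congr fun x hx y _ => by simp [(Finset.mem_sdiff.1 hx).2]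
        have e3 : ∑ x ∈ A \ S, μA x ≤ (1 - ρ) * ∑ x ∈ A, μA x := by
          have := Finset.sum_sdiff (f := μA) hS
          linarith
        have e4 : (1 - ρ) ^ n * ((∑ x ∈ A \ S, μA x) * ∑ y ∈ B, μB y) ≤
            (1 - ρ) ^ (n + 1) * ((∑ x ∈ A, μA x) * ∑ y ∈ B, μB y) := by
          have h1 : 0 ≤ (1 - ρ) ^ n := pow_nonneg (by linarith) n
          calc _ ≤ (1 - ρ) ^ n * (((1 - ρ) * ∑ x ∈ A, μA x) * ∑ y ∈ B, μB y) := by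
                gcongr
                exact hmB B
            _ = _ := by ring
        unfold rectErr at *
        rw [rectSum_sdiff_left hS, rectSum_sdiff_left hS B φ, e1, e2]
        linarith
    · obtain ⟨g, h, Q, hg, hh, hQ, hQe⟩ := ih A (B \ T)
      refine ⟨g, fun y => if y ∈ T then 0 else h y + 1, fun i j => if j = 0 then P else Q i (j - 1),
        fun x => (hg x).trans n.le_succ, fun y => ?_, fun i j => ?_, ?_⟩
      · dsimp only
        split_ifs
        exacts [Nat.zero_le _, Nat.succ_le_succ (hh y)]
      · dsimp only
        split_ifs
        exacts [hPd, hQ _ _]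
      · have e1 : rectErr μA μB f A T (fun x y => (if (if y ∈ T then 0 else h y + 1) = 0 then P
            else Q (g x) ((if y ∈ T then 0 else h y + 1) - 1)).eval x y) =
            rectErr μA μB f A T P.eval :=
          rectSum_congr fun x _ y hy => by simp [hy]
        have e2 : rectErr μA μB f A (B \ T) (fun x y => (if (if y ∈ T then 0 else h y + 1) = 0
            then P else Q (g x) ((if y ∈ T then 0 else h y + 1) - 1)).eval x y) =
            rectErr μA μB f A (B \ T) fun x y => (Q (g x) (h y)).eval x y :=
          rectSum_congr fun x _ y hy => by simp [(Finset.mem_sdiff.1 hy).2]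
        have e3 : ∑ y ∈ B \ T, μB y ≤ (1 - ρ) * ∑ y ∈ B, μB y := by
          have := Finset.sum_sdiff (f := μB) hT
          linarith
        have e4 : (1 - ρ) ^ n * ((∑ x ∈ A, μA x) * ∑ y ∈ B \ T, μB y) ≤
            (1 - ρ) ^ (n + 1) * ((∑ x ∈ A, μA x) * ∑ y ∈ B, μB y) := by
          have h1 : 0 ≤ (1 - ρ) ^ n := pow_nonneg (by linarith) n
          calc _ ≤ (1 - ρ) ^ n * ((∑ x ∈ A, μA x) * ((1 - ρ) * ∑ y ∈ B, μB y)) := by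
                gcongr
                exact hmA A
            _ = _ := by ring
        unfold rectErr at *
        rw [rectSum_sdiff_right hT, rectSum_sdiff_right hT A φ, e1, e2]
        linarith

end RectSum

/-! ### Finding a biased rectangle and halving the cover -/

section Halving

variable {X Y ι : Type} [Fintype ι] {μA : X → ℝ} {μB : Y → ℝ}

/-- If `f⁻¹(true)` is a noticeable part of `A ×ˢ B`, a light cover of `f⁻¹(true)` contains a
rectangle of noticeable size on which `f` is almost always `true`. -/
theorem exists_biased_rect (hA : ∀ x, 0 ≤ μA x) (hB : ∀ y, 0 ≤ μB y) {f : X → Y → Bool}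
    {u : ι → ℝ} (hu : ∀ i, 0 ≤ u i) {S : ι → Finset X} {T : ι → Finset Y} {W c δ : ℝ}
    (hW : 0 < W) (hsum : ∑ i, u i ≤ W) (hc : 0 < c) (hδ : 0 < δ)
    (h1 : ∀ x y, f x y = true → c ≤ cover u S T x y)
    (h0 : ∀ x y, f x y = false → cover u S T x y ≤ δ) {A : Finset X} {B : Finset Y}
    (hbig : 1 / 10 * ((∑ x ∈ A, μA x) * ∑ y ∈ B, μB y) <
      rectSum μA μB A B fun x y => if f x y = true then 1 else 0) :
    ∃ S' ⊆ A, ∃ T' ⊆ B, 0 < ∑ x ∈ S', μA x ∧ 0 < ∑ y ∈ T', μB y ∧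
      c / (40 * W) * ∑ x ∈ A, μA x ≤ ∑ x ∈ S', μA x ∧
      c / (40 * W) * ∑ y ∈ B, μB y ≤ ∑ y ∈ T', μB y ∧
      rectSum μA μB S' T' (fun x y => if f x y = false then 1 else 0) ≤
        20 * δ / c * ((∑ x ∈ S', μA x) * ∑ y ∈ T', μB y) := by
  have hmA : ∀ A : Finset X, 0 ≤ ∑ x ∈ A, μA x := fun A => Finset.sum_nonneg fun x _ => hA x
  have hmB : ∀ B : Finset Y, 0 ≤ ∑ y ∈ B, μB y := fun B => Finset.sum_nonneg fun y _ => hB y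
  have hle : ∀ (b : Bool) (A : Finset X) (B : Finset Y),
      rectSum μA μB A B (fun x y => if f x y = b then 1 else 0) ≤
        (∑ x ∈ A, μA x) * ∑ y ∈ B, μB y := fun b A B => by
    rw [← one_mul (_ * _), ← rectSum_const]
    exact rectSum_mono hA hB A B fun x y => by split_ifs <;> norm_num
  have hnn : ∀ (b : Bool) (A : Finset X) (B : Finset Y),
      0 ≤ rectSum μA μB A B (fun x y => if f x y = b then 1 else 0) := fun b A B =>
    rectSum_nonneg hA hB A B fun x y => by split_ifs <;> norm_num
  set M : ℝ := (∑ x ∈ A, μA x) * ∑ y ∈ B, μB y with hM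
  have hMpos : 0 < M := by
    have := hle true A B
    linarith
  have hs0 : ∑ i, u i * rectSum μA μB (S i ∩ A) (T i ∩ B)
      (fun x y => if f x y = false then 1 else 0) ≤ δ * M := by
    rw [← rectSum_cover_mul]
    refine le_trans (rectSum_mono hA hB A B (ψ := fun x y => δ * 1) fun x y => ?_) ?_
    · split_ifs with h
      · simpa using h0 x y h
      · simpa using hδ.le
    · rw [rectSum_const, mul_one]
  have hs1 : c * rectSum μA μB A B (fun x y => if f x y = true then 1 else 0) ≤
      ∑ i, u i * rectSum μA μB (S i ∩ A) (T i ∩ B)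
        (fun x y => if f x y = true then 1 else 0) := by
    rw [← rectSum_cover_mul, ← rectSum_const_mul]
    refine rectSum_mono hA hB A B fun x y => ?_
    split_ifs with h
    · simpa using h1 x y h
    · simp
  obtain ⟨i, hi⟩ : ∃ i, rectSum μA μB (S i ∩ A) (T i ∩ B)
      (fun x y => if f x y = false then 1 else 0) + δ / (2 * W) * M ≤ 20 * δ / c *
        rectSum μA μB (S i ∩ A) (T i ∩ B) (fun x y => if f x y = true then 1 else 0) := by
    by_contra! h
    have h2 := Finset.sum_le_sum fun i (_ : i ∈ Finset.univ) =>
      mul_le_mul_of_nonneg_left (h i).le (hu i)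
    simp only [mul_add, Finset.sum_add_distrib, ← Finset.sum_mul] at h2
    have h3 : (∑ i, u i) * (δ / (2 * W) * M) ≤ δ / 2 * M := by
      calc _ ≤ W * (δ / (2 * W) * M) := by gcongr
        _ = δ / 2 * M := by field_simp
    have h4 : 20 * δ / c * (c * rectSum μA μB A B fun x y => if f x y = true then 1 else 0) ≤
        ∑ i, u i * (20 * δ / c * rectSum μA μB (S i ∩ A) (T i ∩ B)
          fun x y => if f x y = true then 1 else 0) := by
      calc _ ≤ 20 * δ / c * ∑ i, u i * rectSum μA μB (S i ∩ A) (T i ∩ B)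
              (fun x y => if f x y = true then 1 else 0) := by gcongr
        _ = _ := by
          rw [Finset.mul_sum]
          exact Finset.sum_congr rfl fun i _ => by ring
    have h5 : 20 * δ / c * (c * rectSum μA μB A B fun x y => if f x y = true then 1 else 0) =
        20 * δ * rectSum μA μB A B fun x y => if f x y = true then 1 else 0 := by
      field_simp
    have h6 := mul_lt_mul_of_pos_left hbig (show 0 < 20 * δ by positivity)
    nlinarith [mul_pos hδ hMpos]
  set m : ℝ := (∑ x ∈ S i ∩ A, μA x) * ∑ y ∈ T i ∩ B, μB y with hm
  have hθ : 0 < 20 * δ / c := by positivity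
  have hi1 := mul_le_mul_of_nonneg_left (hle true (S i ∩ A) (T i ∩ B)) hθ.le
  have hζ : 0 < δ / (2 * W) * M := by positivity
  have hρ : c / (40 * W) * M ≤ m := by
    have : δ / (2 * W) * M ≤ 20 * δ / c * m := by
      linarith [hnn false (S i ∩ A) (T i ∩ B)]
    calc c / (40 * W) * M = c / (20 * δ) * (δ / (2 * W) * M) := by
          field_simp
          ring
      _ ≤ c / (20 * δ) * (20 * δ / c * m) := by gcongr
      _ = m := by field_simp
  have hmpos : 0 < m := lt_of_lt_of_le (by positivity) hρ
  have hSA : ∑ x ∈ S i ∩ A, μA x ≤ ∑ x ∈ A, μA x :=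
    Finset.sum_le_sum_of_subset_of_nonneg Finset.inter_subset_right fun x _ _ => hA x
  have hTB : ∑ y ∈ T i ∩ B, μB y ≤ ∑ y ∈ B, μB y :=
    Finset.sum_le_sum_of_subset_of_nonneg Finset.inter_subset_right fun x _ _ => hB x
  have hspos : 0 < ∑ x ∈ S i ∩ A, μA x := pos_of_mul_pos_left hmpos (hmB _)
  have htpos : 0 < ∑ y ∈ T i ∩ B, μB y := pos_of_mul_pos_right hmpos (hmA _)
  refine ⟨S i ∩ A, Finset.inter_subset_right, T i ∩ B, Finset.inter_subset_right,
    hspos, htpos, ?_, ?_, by linarith⟩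
  · refine le_of_mul_le_mul_right ?_ (htpos.trans_le hTB)
    calc _ = c / (40 * W) * M := by rw [hM]; ring
      _ ≤ m := hρ
      _ ≤ _ := by rw [hm]; gcongr
  · refine le_of_mul_le_mul_left ?_ (hspos.trans_le hSA)
    calc _ = c / (40 * W) * M := by rw [hM]; ring
      _ ≤ m := hρ
      _ ≤ _ := by rw [hm]; gcongr

/-- A cover of `f⁻¹(false)` can be halved on one of the two strips through a rectangle on which
`f` is almost always `true`, with a small loss of coverage. -/
theorem exists_halved_cover (hA : ∀ x, 0 ≤ μA x) (hB : ∀ y, 0 ≤ μB y) {f : X → Y → Bool}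
    {w : ι → ℝ} (hw : ∀ i, 0 ≤ w i) {S : ι → Finset X} {T : ι → Finset Y} {δ θ σ κ : ℝ}
    (hσ : 0 < σ) (hσκ : σ ≤ κ) (hκ : δ + θ ≤ σ * κ) (hδ : 0 ≤ δ)
    (hle : ∀ x y, cover w S T x y ≤ 1) (h1 : ∀ x y, f x y = true → cover w S T x y ≤ δ)
    {A S' : Finset X} {B T' : Finset Y} (hS : S' ⊆ A)
    (hs : 0 < ∑ x ∈ S', μA x) (ht : 0 < ∑ y ∈ T', μB y)
    (hR : rectSum μA μB S' T' (fun x y => if f x y = false then 1 else 0) ≤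
        θ * ((∑ x ∈ S', μA x) * ∑ y ∈ T', μB y)) :
    ∃ w' : ι → ℝ, (∀ i, 0 ≤ w' i) ∧ (∀ i, w' i ≤ w i) ∧ ∑ i, w' i ≤ (∑ i, w i) / 2 ∧
      (rectSum μA μB S' B (fun x y => cover w S T x y - cover w' S T x y) ≤
          κ * ((∑ x ∈ S', μA x) * ∑ y ∈ B, μB y) ∨
        rectSum μA μB A T' (fun x y => cover w S T x y - cover w' S T x y) ≤
          κ * ((∑ x ∈ A, μA x) * ∑ y ∈ T', μB y)) := by
  have hmA : ∀ A : Finset X, 0 ≤ ∑ x ∈ A, μA x := fun A => Finset.sum_nonneg fun x _ => hA x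
  have hmB : ∀ B : Finset Y, 0 ≤ ∑ y ∈ B, μB y := fun B => Finset.sum_nonneg fun y _ => hB y
  have ha : 0 < ∑ x ∈ A, μA x :=
    hs.trans_le (Finset.sum_le_sum_of_subset_of_nonneg hS fun x _ _ => hA x)
  have hst : ∑ i, w i * ((∑ x ∈ S i ∩ S', μA x) * ∑ y ∈ T i ∩ T', μB y) ≤
      (δ + θ) * ((∑ x ∈ S', μA x) * ∑ y ∈ T', μB y) := by
    rw [← rectSum_cover]
    refine le_trans (rectSum_mono hA hB S' T'
      (ψ := fun x y => δ + if f x y = false then 1 else 0) fun x y => ?_) ?_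
    · cases h : f x y
      · simpa using (hle x y).trans (le_add_of_nonneg_left hδ)
      · simpa using h1 x y h
    · rw [rectSum_add, rectSum_const]
      linarith
  have hab : ∑ i, w i * ((∑ x ∈ S i ∩ A, μA x) * ∑ y ∈ T i ∩ B, μB y) ≤
      (∑ x ∈ A, μA x) * ∑ y ∈ B, μB y := by
    rw [← rectSum_cover, ← one_mul (_ * _), ← rectSum_const]
    exact rectSum_mono hA hB A B hle
  let J : ι → Prop := fun i =>
    (∑ x ∈ S i ∩ S', μA x) * ∑ x ∈ A, μA x < σ * (∑ x ∈ S i ∩ A, μA x) * ∑ x ∈ S', μA x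
  have hsplit : ∀ i, w i = (if J i then w i else 0) + if J i then 0 else w i := fun i => by
    split_ifs <;> simp
  have hsum : ∑ i, w i = (∑ i, if J i then w i else 0) + ∑ i, if J i then 0 else w i := by
    rw [← Finset.sum_add_distrib]
    exact Finset.sum_congr rfl fun i _ => hsplit i
  have hcov : ∀ x y, cover w S T x y = cover (fun i => if J i then w i else 0) S T x y +
      cover (fun i => if J i then 0 else w i) S T x y := fun x y => by
    simp only [cover, ← Finset.sum_add_distrib]
    refine Finset.sum_congr rfl fun i _ => ?_
    split_ifs <;> simp
  rcases le_total (∑ i, if J i then 0 else w i) ((∑ i, w i) / 2) with h | h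
  · refine ⟨fun i => if J i then 0 else w i, fun i => ?_, fun i => ?_, h, Or.inl ?_⟩
    · dsimp only
      split_ifs <;> simp [hw]
    · dsimp only
      split_ifs <;> simp [hw]
    · simp only [hcov, add_sub_cancel_right]
      rw [rectSum_cover]
      refine le_of_mul_le_mul_left ?_ ha
      calc _ ≤ ∑ i, σ * (∑ x ∈ S', μA x) *
            (w i * ((∑ x ∈ S i ∩ A, μA x) * ∑ y ∈ T i ∩ B, μB y)) := by
            rw [Finset.mul_sum]
            refine Finset.sum_le_sum fun i _ => ?_
            by_cases hJ : J i
            · rw [if_pos hJ]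
              have := mul_le_mul_of_nonneg_left hJ.le (mul_nonneg (hw i) (hmB (T i ∩ B)))
              linarith
            · rw [if_neg hJ, zero_mul, mul_zero]
              have := hw i
              have := hmA S'
              have := hmA (S i ∩ A)
              have := hmB (T i ∩ B)
              positivity
        _ = σ * (∑ x ∈ S', μA x) *
            ∑ i, w i * ((∑ x ∈ S i ∩ A, μA x) * ∑ y ∈ T i ∩ B, μB y) :=
          (Finset.mul_sum _ _ _).symm
        _ ≤ σ * (∑ x ∈ S', μA x) * ((∑ x ∈ A, μA x) * ∑ y ∈ B, μB y) :=
          mul_le_mul_of_nonneg_left hab (mul_pos hσ hs).le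
        _ ≤ κ * (∑ x ∈ S', μA x) * ((∑ x ∈ A, μA x) * ∑ y ∈ B, μB y) := by
            have := hmB B
            gcongr
        _ = _ := by ring
  · refine ⟨fun i => if J i then w i else 0, fun i => ?_, fun i => ?_, by linarith, Or.inr ?_⟩
    · dsimp only
      split_ifs <;> simp [hw]
    · dsimp only
      split_ifs <;> simp [hw]
    · simp only [hcov, add_sub_cancel_left]
      rw [rectSum_cover]
      refine le_of_mul_le_mul_left ?_ (mul_pos hσ hs)
      calc _ ≤ ∑ i, (∑ x ∈ A, μA x) *
            (w i * ((∑ x ∈ S i ∩ S', μA x) * ∑ y ∈ T i ∩ T', μB y)) := by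
            rw [Finset.mul_sum]
            refine Finset.sum_le_sum fun i _ => ?_
            by_cases hJ : J i
            · rw [if_pos hJ, zero_mul, mul_zero]
              have := hw i
              have := hmA (S i ∩ S')
              have := hmB (T i ∩ T')
              positivity
            · rw [if_neg hJ]
              have := mul_le_mul_of_nonneg_left (not_lt.1 hJ) (mul_nonneg (hw i) (hmB (T i ∩ T')))
              linarith
        _ = (∑ x ∈ A, μA x) *
            ∑ i, w i * ((∑ x ∈ S i ∩ S', μA x) * ∑ y ∈ T i ∩ T', μB y) :=
          (Finset.mul_sum _ _ _).symm
        _ ≤ (∑ x ∈ A, μA x) * ((σ * κ) * ((∑ x ∈ S', μA x) * ∑ y ∈ T', μB y)) := by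
            refine mul_le_mul_of_nonneg_left (hst.trans ?_) ha.le
            gcongr
        _ = _ := by ring

/-- The error potential of a partial cover `w` of `f⁻¹(false)`: the missing coverage. -/
noncomputable def deficit (f : X → Y → Bool) (c : ℝ) (w : ι → ℝ) (S : ι → Finset X)
    (T : ι → Finset Y) (x : X) (y : Y) : ℝ :=
  if f x y = false then max 0 (c - cover w S T x y) / c else 0

theorem deficit_nonneg (f : X → Y → Bool) {c : ℝ} (hc : 0 < c) (w : ι → ℝ) (S : ι → Finset X)
    (T : ι → Finset Y) (x : X) (y : Y) : 0 ≤ deficit f c w S T x y := by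
  unfold deficit
  split_ifs
  exacts [div_nonneg (le_max_left _ _) hc.le, le_rfl]

theorem deficit_le (f : X → Y → Bool) {c : ℝ} (hc : 0 < c) {w w' : ι → ℝ} (h : ∀ i, w' i ≤ w i)
    (S : ι → Finset X) (T : ι → Finset Y) (x : X) (y : Y) :
    deficit f c w' S T x y ≤
      deficit f c w S T x y + 1 / c * (cover w S T x y - cover w' S T x y) := by
  have := cover_mono h S T x y
  unfold deficit
  split_ifs
  · rw [one_div_mul_eq_div, ← add_div]
    gcongr
    refine max_le ?_ ?_
    · linarith [le_max_left 0 (c - cover w S T x y)]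
    · linarith [le_max_right 0 (c - cover w S T x y)]
  · rw [zero_add]
    exact mul_nonneg (by positivity) (by linarith)

end Halving

/-! ### The protocol -/

/-- Repeatedly halving a cover of `f⁻¹(false)` gives a protocol for a product distribution. -/
theorem exists_protocol_of_covers {X Y ι κ : Type} [Fintype ι] [Fintype κ]
    {μA : X → ℝ} {μB : Y → ℝ} (hA : ∀ x, 0 ≤ μA x) (hB : ∀ y, 0 ≤ μB y) {f : X → Y → Bool}
    {u : κ → ℝ} (hu : ∀ i, 0 ≤ u i) {U : κ → Finset X} {V : κ → Finset Y}
    {W c δ σ l τ η e : ℝ} {n b : ℕ} (hW : 1 ≤ W) (hsum : ∑ i, u i ≤ W) (hc : 0 < c) (hc1 : c ≤ 1)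
    (hδ : 0 < δ) (h1 : ∀ x y, f x y = true → c ≤ cover u U V x y)
    (h0 : ∀ x y, f x y = false → cover u U V x y ≤ δ)
    (hσ : 0 < σ) (hσl : σ ≤ c * l) (hδl : δ + 20 * δ / c ≤ σ * (c * l))
    (hτ : (1 - c / (40 * W)) ^ n ≤ τ) (hn : n < 2 ^ b) (he : 1 / 10 ≤ e) (hηe : η ≤ c * e)
    {S : ι → Finset X} {T : ι → Finset Y} (m : ℕ) :
    ∀ w : ι → ℝ, (∀ i, 0 ≤ w i) → ∑ i, w i ≤ η * 2 ^ m → (∀ x y, cover w S T x y ≤ 1) →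
      (∀ x y, f x y = true → cover w S T x y ≤ δ) → ∀ (A : Finset X) (B : Finset Y),
      ∃ P : Protocol X Y, P.depth ≤ m * (2 * b) ∧ rectErr μA μB f A B P.eval ≤
        rectSum μA μB A B (deficit f c w S T) +
          (e + m * (l + τ)) * ((∑ x ∈ A, μA x) * ∑ y ∈ B, μB y) := by
  have hmA : ∀ A : Finset X, 0 ≤ ∑ x ∈ A, μA x := fun A => Finset.sum_nonneg fun x _ => hA x
  have hmB : ∀ B : Finset Y, 0 ≤ ∑ y ∈ B, μB y := fun B => Finset.sum_nonneg fun y _ => hB y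
  have hl : 0 < l := pos_of_mul_pos_right (hσ.trans_le hσl) hc.le
  have hρ1 : c / (40 * W) ≤ 1 := (div_le_one (by linarith)).2 (by linarith)
  have hτ0 : 0 ≤ τ := (pow_nonneg (by linarith) n).trans hτ
  induction m with
  | zero =>
    intro w hw hws _ _ A B
    refine ⟨.leaf true, Nat.zero_le _, ?_⟩
    rw [Nat.cast_zero, zero_mul, add_zero, ← rectSum_const, ← rectSum_add]
    refine rectSum_mono hA hB A B fun x y => ?_
    cases h : f x y
    · have h2 : cover w S T x y ≤ c * e :=
        (cover_le_sum hw S T x y).trans ((hws.trans_eq (by simp)).trans hηe)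
      have h3 : (c - cover w S T x y) / c ≤ deficit f c w S T x y := by
        rw [deficit, if_pos h]
        gcongr
        exact le_max_right _ _
      have h4 : 1 - e ≤ (c - cover w S T x y) / c := by
        rw [le_div_iff₀ hc]
        linarith
      simp only [Protocol.eval]
      norm_num
      linarith
    · have := deficit_nonneg f hc w S T x y
      simp only [Protocol.eval]
      norm_num
      linarith
  | succ m ih =>
    intro w hw hws hw1 hwδ A B
    set E : ℝ := e + (m + 1) * l + m * τ with hE
    have hE0 : 0 ≤ E := by positivity
    have hEe : e ≤ E := by
      have : 0 ≤ (m + 1) * l + m * τ := by positivity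
      linarith
    have hdef := deficit_nonneg f hc w S T
    have hcut : ∀ (A : Finset X) (B : Finset Y),
        (∃ P : Protocol X Y, P.depth ≤ m * (2 * b) ∧ rectErr μA μB f A B P.eval ≤
          rectSum μA μB A B fun x y => deficit f c w S T x y + E) ∨
        (∃ S' ⊆ A, c / (40 * W) * ∑ x ∈ A, μA x ≤ ∑ x ∈ S', μA x ∧
          ∃ P : Protocol X Y, P.depth ≤ m * (2 * b) ∧ rectErr μA μB f S' B P.eval ≤
            rectSum μA μB S' B fun x y => deficit f c w S T x y + E) ∨
        (∃ T' ⊆ B, c / (40 * W) * ∑ y ∈ B, μB y ≤ ∑ y ∈ T', μB y ∧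
          ∃ P : Protocol X Y, P.depth ≤ m * (2 * b) ∧ rectErr μA μB f A T' P.eval ≤
            rectSum μA μB A T' fun x y => deficit f c w S T x y + E) := by
      intro A B
      simp only [rectSum_add, rectSum_const]
      rcases le_or_gt (rectSum μA μB A B fun x y => if f x y = true then 1 else 0)
        (1 / 10 * ((∑ x ∈ A, μA x) * ∑ y ∈ B, μB y)) with hs | hs
      · refine Or.inl ⟨.leaf false, Nat.zero_le _, ?_⟩
        have e1 : rectErr μA μB f A B (Protocol.leaf false : Protocol X Y).eval =
            rectSum μA μB A B fun x y => if f x y = true then 1 else 0 :=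
          rectSum_congr fun x _ y _ => by cases h : f x y <;> simp [Protocol.eval]
        rw [e1]
        have h2 := rectSum_nonneg hA hB A B hdef
        have h3 := mul_le_mul_of_nonneg_right (he.trans hEe) (mul_nonneg (hmA A) (hmB B))
        linarith
      · obtain ⟨S', hS, T', hT, hs0, ht0, hρS, hρT, hR⟩ :=
          exists_biased_rect hA hB hu (by linarith) hsum hc hδ h1 h0 hs
        obtain ⟨w', hw'0, hw'w, hw's, hlost⟩ :=
          exists_halved_cover (B := B) hA hB hw hσ hσl hδl hδ.le hw1 hwδ hS hs0 ht0 hR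
        have hrec := ih w' hw'0 (by rw [pow_succ] at hws; linarith)
          (fun x y => (cover_mono hw'w S T x y).trans (hw1 x y))
          (fun x y hf => (cover_mono hw'w S T x y).trans (hwδ x y hf))
        have hstep : ∀ (A : Finset X) (B : Finset Y),
            rectSum μA μB A B (fun x y => cover w S T x y - cover w' S T x y) ≤
              c * l * ((∑ x ∈ A, μA x) * ∑ y ∈ B, μB y) →
            ∃ P : Protocol X Y, P.depth ≤ m * (2 * b) ∧ rectErr μA μB f A B P.eval ≤
              rectSum μA μB A B (deficit f c w S T) +
                E * ((∑ x ∈ A, μA x) * ∑ y ∈ B, μB y) := by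
          intro A B hlost
          obtain ⟨P, hPd, hP⟩ := hrec A B
          refine ⟨P, hPd, hP.trans ?_⟩
          have h2 := rectSum_mono hA hB A B (deficit_le f hc hw'w S T)
          rw [rectSum_add, rectSum_const_mul] at h2
          have h3 : 1 / c * rectSum μA μB A B
              (fun x y => cover w S T x y - cover w' S T x y) ≤
                l * ((∑ x ∈ A, μA x) * ∑ y ∈ B, μB y) := by
            rw [one_div_mul_eq_div, div_le_iff₀ hc]
            linarith
          rw [hE]
          linarith
        rcases hlost with hlost | hlost
        · exact Or.inr (Or.inl ⟨S', hS, hρS, hstep S' B hlost⟩)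
        · exact Or.inr (Or.inr ⟨T', hT, hρT, hstep A T' hlost⟩)
    obtain ⟨g, h, Q, hg, hh, hQ, hQe⟩ := exists_chain (d := m * (2 * b)) hA hB f
      (φ := fun x y => deficit f c w S T x y + E) (fun x y => add_nonneg (hdef x y) hE0) hρ1
      hcut n A B
    obtain ⟨P, hPd, hP⟩ := Protocol.exists_send (b := b) g h Q (fun x => (hg x).trans_lt hn)
      (fun y => (hh y).trans_lt hn) hQ
    refine ⟨P, hPd.trans_eq (by ring), ?_⟩
    have e1 : rectErr μA μB f A B P.eval =
        rectErr μA μB f A B fun x y => (Q (g x) (h y)).eval x y :=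
      rectSum_congr fun x _ y _ => by rw [hP]
    rw [rectSum_add, rectSum_const] at hQe
    have := mul_le_mul_of_nonneg_right hτ (mul_nonneg (hmA A) (hmB B))
    rw [e1]
    push_cast
    linarith

/-! ### Choice of parameters -/

/-- Covers of `f⁻¹(z)` by rectangles extracted from the information complexity, amplified by
taking `k`-fold intersections. -/
theorem exists_amplified_cover {X Y : Type} [Fintype X] [Fintype Y] (f : X → Y → Bool) {D : ℕ}
    (hIC : 0 < IC f (1 / 8)) (hD : 64 * IC f (1 / 8) ≤ D) (z : Bool) (k : ℕ) :
    ∃ (w : (Fin k → Finset X × Finset Y) → ℝ) (S : (Fin k → Finset X × Finset Y) → Finset X)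
      (T : (Fin k → Finset X × Finset Y) → Finset Y),
      (∀ i, 0 ≤ w i) ∧ ∑ i, w i ≤ 2 ^ ((2 * D + 5) * k) ∧ (∀ x y, cover w S T x y ≤ 1) ∧
      (∀ x y, f x y = z → (3 / 4) ^ k ≤ cover w S T x y) ∧
      ∀ x y, f x y ≠ z → cover w S T x y ≤ (1 / 4) ^ k := by
  have hD0 : 0 < D := by
    have : (0 : ℝ) < D := by linarith
    exact_mod_cast this
  obtain ⟨v, hv0, hvs, hv1, hv⟩ := exists_rcov_of_forall_dist f z (W := 2 ^ (2 * D + 5))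
    (by positivity) (show (0 : ℝ) < 1 / 4 by norm_num) fun ν hν => by
      obtain ⟨m, ρ, P, hρ, herr, hinfo⟩ := exists_infoCost_lt hν hIC
        (show IC f (1 / 8) < 2 * IC f (1 / 8) by linarith)
      exact exists_rcov_of_infoCost f z hν hρ P herr hD0 (by linarith)
  obtain ⟨w, S, T, hw0, hws, hw⟩ := exists_cover_pow v hv0 Prod.fst Prod.snd k
  have hrcov : ∀ x y, cover w S T x y = rcov v x y ^ k := hw
  have hnn : ∀ x y, 0 ≤ rcov v x y := cover_nonneg hv0 Prod.fst Prod.snd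
  refine ⟨w, S, T, hw0, ?_, fun x y => ?_, fun x y h => ?_, fun x y h => ?_⟩
  · rw [hws, pow_mul]
    exact pow_le_pow_left₀ (Finset.sum_nonneg fun R _ => hv0 R) hvs k
  · rw [hrcov]
    exact pow_le_one₀ (hnn x y) (hv1 x y)
  · have := hv x y
    rw [if_pos h] at this
    rw [hrcov]
    exact pow_le_pow_left₀ (by norm_num) (by linarith) k
  · have := hv x y
    rw [if_neg h] at this
    rw [hrcov]
    exact pow_le_pow_left₀ (hnn x y) this.le k

theorem one_sub_pow_le_of_le {ρ a : ℝ} {b : ℕ} (hρ0 : 0 ≤ ρ) (hρ1 : ρ ≤ 1) (ha : 0 < a)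
    (h : a ≤ 2 ^ b * ρ) : (1 - ρ) ^ (2 ^ b - 1) ≤ 1 / a := by
  set n := 2 ^ b - 1 with hn
  have hcast : (n : ℝ) + 1 = 2 ^ b := by
    have : n + 1 = 2 ^ b := Nat.sub_add_cancel Nat.one_le_two_pow
    exact_mod_cast this
  have h1 : a ≤ (1 + ρ) ^ n := by
    refine le_trans ?_ (one_add_mul_le_pow (by linarith) n)
    rw [← hcast] at h
    linarith
  rw [le_div_iff₀ ha]
  calc (1 - ρ) ^ n * a ≤ (1 - ρ) ^ n * (1 + ρ) ^ n := by
        gcongr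
    _ = (1 - ρ ^ 2) ^ n := by rw [← mul_pow]; ring
    _ ≤ 1 := pow_le_one₀ (by nlinarith) (by nlinarith)

theorem mul_four_fifths_pow_le {I : ℝ} {l : ℕ} (hl : 1 ≤ l) (hI : I ≤ 2 ^ l) :
    134 * I * (100 * l) * (21 * (4 / 5) ^ (100 * l)) ≤ 1 / 10 := by
  have h1 : (l : ℝ) ≤ 2 ^ l := by exact_mod_cast Nat.lt_two_pow_self.le
  calc 134 * I * (100 * l) * (21 * (4 / 5) ^ (100 * l))
      ≤ 134 * 2 ^ l * (100 * 2 ^ l) * (21 * (4 / 5) ^ (100 * l)) := by gcongr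
    _ = 281400 * (2 * 2 * (4 / 5) ^ 100) ^ l := by
        rw [mul_pow, mul_pow, ← pow_mul]
        ring
    _ ≤ 281400 * (2 * 2 * (4 / 5) ^ 100) ^ 1 := by
        gcongr ?_ * ?_
        exact pow_le_pow_of_le_one (by norm_num) (by norm_num) hl
    _ ≤ 1 / 10 := by norm_num

/-- The protocol for a total function of information complexity `I` under a product
distribution, with explicit constants. -/
theorem exists_protocol_of_IC {X Y : Type} [Fintype X] [Fintype Y] (f : X → Y → Bool)
    {μA : X → ℝ} {μB : Y → ℝ} (hA : IsDist μA) (hB : IsDist μB) (hIC : 2 ≤ IC f (1 / 8)) :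
    ∃ P : Protocol X Y,
      (P.depth : ℝ) ≤ 14 * 26800 ^ 2 * (IC f (1 / 8) * Real.logb 2 (IC f (1 / 8))) ^ 2 ∧
      commErr (fun x y => μA x * μB y) f P ≤ 0.49 := by
  set I := IC f (1 / 8) with hI
  set L := Real.logb 2 I with hL
  have hL1 : 1 ≤ L := by
    rw [hL, Real.le_logb_iff_rpow_le (by norm_num) (by linarith)]
    simpa using hIC
  set l := ⌈L⌉₊ with hl
  have hLl : L ≤ l := Nat.le_ceil L
  have hl2 : (l : ℝ) ≤ 2 * L := by
    have := Nat.ceil_lt_add_one (show 0 ≤ L by linarith)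
    linarith
  have hl1 : 1 ≤ l := by
    have : (1 : ℝ) ≤ l := hL1.trans hLl
    exact_mod_cast this
  have hIl : I ≤ 2 ^ l := by
    rw [← Real.rpow_natCast, ← Real.logb_le_iff_le_rpow (by norm_num) (by linarith)]
    exact hLl
  set D := ⌈64 * I⌉₊ with hD
  have hD1 : 64 * I ≤ D := Nat.le_ceil _
  have hD2 : (D : ℝ) ≤ 64 * I + 1 :=
    (Nat.ceil_lt_add_one (show 0 ≤ 64 * I by linarith)).le
  set k := 100 * l with hk
  have hkR : (k : ℝ) = 100 * l := by rw [hk]; push_cast; rfl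
  set N := (2 * D + 5) * k with hN
  set m := N + 4 + k with hm
  have hm1 : 1 ≤ m := by omega
  have hmI : (m : ℝ) ≤ 134 * I * (100 * l) := by
    have h1 : m ≤ (2 * D + 10) * k := by
      rw [hm, hN]
      have : 1 ≤ k := by omega
      nlinarith
    have h2 : (m : ℝ) ≤ (2 * D + 10) * k := by exact_mod_cast h1
    refine h2.trans ?_
    rw [hkR]
    gcongr
    linarith
  have hmL : (m : ℝ) ≤ 26800 * (I * L) := by
    calc (m : ℝ) ≤ 134 * I * (100 * l) := hmI
      _ ≤ 134 * I * (100 * (2 * L)) := by gcongr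
      _ = _ := by ring
  have hmpos : (0 : ℝ) < m := by exact_mod_cast hm1
  have hc0 : (0 : ℝ) < (3 / 4) ^ k := by positivity
  have hc1 : (3 / 4 : ℝ) ^ k ≤ 1 := pow_le_one₀ (by norm_num) (by norm_num)
  have h2N : (1 : ℝ) ≤ 2 ^ N := one_le_pow₀ (by norm_num)
  obtain ⟨u, U, V, hu0, hus, -, hu1, huδ⟩ :=
    exists_amplified_cover f (by linarith) hD1 true k
  obtain ⟨w, S, T, hw0, hws, hwle, hw1, hwδ⟩ :=
    exists_amplified_cover f (by linarith) hD1 false k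
  have hτ : (1 - (3 / 4) ^ k / (40 * 2 ^ N) : ℝ) ^ (2 ^ (2 * m + 5) - 1) ≤ 1 / (10 * m) := by
    refine one_sub_pow_le_of_le (by positivity) ?_ (by positivity) ?_
    · exact (div_le_one (by positivity)).2 (by linarith)
    · have h1 : (m : ℝ) ≤ 2 ^ m := by exact_mod_cast Nat.lt_two_pow_self.le
      have h2 : (1 : ℝ) ≤ 2 ^ k * (3 / 4) ^ k := by
        rw [← mul_pow]
        exact one_le_pow₀ (by norm_num)
      have h3 : (2 : ℝ) ^ (2 * m + 5) * ((3 / 4) ^ k / (40 * 2 ^ N)) =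
          2 ^ m * (2 ^ k * (3 / 4) ^ k) * (512 / 40) := by
        have : (2 : ℝ) ^ (2 * m + 5) = 2 ^ m * (2 ^ N * 2 ^ 4 * 2 ^ k) * 2 ^ 5 := by
          rw [← pow_add, ← pow_add, ← hm]
          ring
        rw [this]
        field_simp
        norm_num
      rw [h3]
      nlinarith [mul_le_mul h1 h2 zero_le_one (by positivity)]
  obtain ⟨P, hPd, hP⟩ := exists_protocol_of_covers (b := 2 * m + 5) (η := (3 / 4) ^ k * (1 / 10))
    (l := 21 * (4 / 5) ^ k) (σ := (3 / 5) ^ k) (e := 1 / 10) hA.1 hB.1 hu0 h2N hus hc0 hc1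
    (show (0 : ℝ) < (1 / 4) ^ k by positivity) hu1
    (fun x y h => huδ x y (by simp [h])) (by positivity)
    (by
      rw [mul_left_comm, ← mul_pow]
      norm_num)
    (by
      have h1 : (1 / 4 : ℝ) ^ k = (1 / 3) ^ k * (3 / 4) ^ k := by
        rw [← mul_pow]
        norm_num
      have h2 : (1 / 4 : ℝ) ^ k ≤ (1 / 3) ^ k :=
        pow_le_pow_left₀ (by norm_num) (by norm_num) k
      have h3 : (3 / 5 : ℝ) ^ k * ((3 / 4) ^ k * (21 * (4 / 5) ^ k)) = 21 * (9 / 25) ^ k := by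
        rw [mul_left_comm _ (21 : ℝ), mul_left_comm _ (21 : ℝ), ← mul_pow, ← mul_pow]
        norm_num
      have h4 : (1 / 3 : ℝ) ^ k ≤ (9 / 25) ^ k :=
        pow_le_pow_left₀ (by norm_num) (by norm_num) k
      have h5 : 20 * (1 / 4 : ℝ) ^ k / (3 / 4) ^ k = 20 * (1 / 3) ^ k := by
        rw [h1]
        field_simp
      rw [h3, h5]
      linarith)
    hτ (Nat.sub_lt (by positivity) one_pos) le_rfl le_rfl m w hw0
    (by
      refine hws.trans ?_
      have h1 : (1 : ℝ) ≤ 2 ^ k * (3 / 4) ^ k := by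
        rw [← mul_pow]
        exact one_le_pow₀ (by norm_num)
      have h2 : (3 / 4 : ℝ) ^ k * (1 / 10) * 2 ^ m =
          2 ^ N * ((2 ^ k * (3 / 4) ^ k) * (16 / 10)) := by
        rw [hm, pow_add, pow_add]
        ring
      rw [h2]
      exact le_mul_of_one_le_right (by positivity) (by linarith))
    hwle (fun x y h => hwδ x y (by simp [h])) Finset.univ Finset.univ
  refine ⟨P, ?_, ?_⟩
  · calc (P.depth : ℝ) ≤ (m * (2 * (2 * m + 5)) : ℕ) := by exact_mod_cast hPd
      _ ≤ (14 * m ^ 2 : ℕ) := by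
          norm_cast
          nlinarith
      _ = 14 * (m : ℝ) ^ 2 := by push_cast; rfl
      _ ≤ 14 * (26800 * (I * L)) ^ 2 := by gcongr
      _ = _ := by ring
  · have hdef : rectSum μA μB Finset.univ Finset.univ (deficit f ((3 / 4) ^ k) w S T) = 0 := by
      refine Finset.sum_eq_zero fun x _ => Finset.sum_eq_zero fun y _ => ?_
      rw [deficit]
      split_ifs with h
      · rw [max_eq_left (by linarith [hw1 x y h]), zero_div, mul_zero]
      · rw [mul_zero]
    have herr : rectErr μA μB f Finset.univ Finset.univ P.eval =
        commErr (fun x y => μA x * μB y) f P := by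
      simp only [rectErr, rectSum, commErr, mul_ite, mul_one, mul_zero]
    rw [herr, hdef, hA.2, hB.2, zero_add, mul_one, mul_one, mul_add] at hP
    have h1 : (m : ℝ) * (21 * (4 / 5) ^ k) ≤ 1 / 10 :=
      (mul_le_mul_of_nonneg_right hmI (by positivity)).trans (mul_four_fifths_pow_le hl1 hIl)
    have h2 : (m : ℝ) * (1 / (10 * m)) = 1 / 10 := by field_simp
    norm_num at *
    linarith

/-- **CC vs information complexity (Theorem 1.1, eq. (1)).** There is a universal constant
`C > 0` such that for every `n`, every total `f : {0,1}ⁿ × {0,1}ⁿ → {0,1}` and every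
product distribution `μ = μA ⊗ μB` on `{0,1}ⁿ × {0,1}ⁿ` (with `IC_{1/8}(f) ≥ 2`),
`CC^μ_{0.49}(f) ≤ C · (IC_{1/8}(f) · log IC_{1/8}(f))²`. -/
theorem cc_le_IC_sq :
    ∃ C : ℝ, 0 < C ∧
      ∀ (n : ℕ) (f : (Fin n → Bool) → (Fin n → Bool) → Bool)
        (μA μB : (Fin n → Bool) → ℝ), IsDist μA → IsDist μB →
        2 ≤ IC f (1/8) →
        (CCdist (fun x y => μA x * μB y) f 0.49 : ℝ) ≤
          C * (IC f (1/8) * Real.logb 2 (IC f (1/8))) ^ 2 := by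
  refine ⟨14 * 26800 ^ 2, by norm_num, fun n f μA μB hA hB hIC => ?_⟩
  obtain ⟨P, hPd, hP⟩ := exists_protocol_of_IC f hA hB hIC
  exact le_trans (Nat.cast_le.2 (Nat.sInf_le ⟨P, le_rfl, hP⟩)) hPd
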